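/- For triangulations T₁ and T₂ of P(Q): T₁ is covered by T₂ in the triangulation order if and only if F(T₁) is covered by F(T₂) in the mar order, where F(T) = ⊕_{γ(a,b) ∈ T} M(a+1, b). Consequently, F is an isomorphism of posets from the type A Cambrian lattice on triangulations of P(Q) onto the poset of isomorphism classes of maximal almost rigid representations of Q generated by the mar covering relation. -/

import Mathlib

open scoped Classical

noncomputable section

namespace CambrianA

/-! ### Combinatorics of a type `A_{n+2}` quiver.

Vertices are `1, …, n+2`.  For `1 ≤ i ≤ n+1`, `ε i = true` means that the arrow between
`i` and `i+1` is oriented `i → i+1` (`i` is *upper-barred*), and `ε i = false` means it is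
oriented `(i+1) → i` (`i` is *lower-barred*). -/

/-- `MaxIncr n ε i j` : the path `i → i+1 → ⋯ → j` is a maximal increasing path of `Q`. -/
def MaxIncr (n : ℕ) (ε : ℕ → Bool) (i j : ℕ) : Prop :=
  1 ≤ i ∧ i ≤ j ∧ j ≤ n + 2 ∧ (∀ ℓ, i ≤ ℓ → ℓ < j → ε ℓ = true) ∧
    (i = 1 ∨ ε (i - 1) = false) ∧ (j = n + 2 ∨ ε j = false)

/-- `MaxDecr n ε i j` : the path `i → i-1 → ⋯ → j` is a maximal decreasing path of `Q`. -/
def MaxDecr (n : ℕ) (ε : ℕ → Bool) (i j : ℕ) : Prop :=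
  1 ≤ j ∧ j ≤ i ∧ i ≤ n + 2 ∧ (∀ ℓ, j ≤ ℓ → ℓ < i → ε ℓ = false) ∧
    (i = n + 2 ∨ ε i = true) ∧ (j = 1 ∨ ε (j - 1) = true)

/-- Vertices of the polygon lying on the lower boundary: `0`, `n+2` and lower-barred ones. -/
def LowerVertex (n : ℕ) (ε : ℕ → Bool) (x : ℕ) : Prop :=
  x = 0 ∨ x = n + 2 ∨ (1 ≤ x ∧ x ≤ n + 1 ∧ ε x = false)

/-- Vertices of the polygon lying on the upper boundary: `0`, `n+2` and upper-barred ones. -/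
def UpperVertex (n : ℕ) (ε : ℕ → Bool) (x : ℕ) : Prop :=
  x = 0 ∨ x = n + 2 ∨ (1 ≤ x ∧ x ≤ n + 1 ∧ ε x = true)

/-- `(a,b)` is a lower boundary edge: `a < b` are consecutive lower vertices. -/
def LowerEdge (n : ℕ) (ε : ℕ → Bool) (a b : ℕ) : Prop :=
  LowerVertex n ε a ∧ LowerVertex n ε b ∧ a < b ∧
    ∀ c, LowerVertex n ε c → ¬(a < c ∧ c < b)

/-- `(a,b)` is an upper boundary edge: `a < b` are consecutive upper vertices. -/
def UpperEdge (n : ℕ) (ε : ℕ → Bool) (a b : ℕ) : Prop :=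
  UpperVertex n ε a ∧ UpperVertex n ε b ∧ a < b ∧
    ∀ c, UpperVertex n ε c → ¬(a < c ∧ c < b)

def BoundaryEdge (n : ℕ) (ε : ℕ → Bool) (a b : ℕ) : Prop :=
  LowerEdge n ε a b ∨ UpperEdge n ε a b

/-- `IsHook n ε a lo hi` : the hook of the arrow of `Q` between `a` and `a+1` is the
maximal path supported on the interval `[lo, hi]`.
If `ε a = true` (arrow `a → a+1`, source `a`), the hook is the maximal decreasing path
starting at `a`; if `ε a = false` (arrow `a+1 → a`, source `a+1`), the hook is the
maximal increasing path starting at `a+1`. -/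
def IsHook (n : ℕ) (ε : ℕ → Bool) (a lo hi : ℕ) : Prop :=
  if ε a = true then
    hi = a ∧ 1 ≤ lo ∧ lo ≤ a ∧ (∀ ℓ, lo ≤ ℓ → ℓ < a → ε ℓ = false) ∧
      (lo = 1 ∨ ε (lo - 1) = true)
  else
    lo = a + 1 ∧ a + 1 ≤ hi ∧ hi ≤ n + 2 ∧ (∀ ℓ, a + 1 ≤ ℓ → ℓ < hi → ε ℓ = true) ∧
      (hi = n + 2 ∨ ε hi = false)

/-- `IsCohook n ε a lo hi` : the cohook of the arrow of `Q` between `a` and `a+1` is the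
maximal path supported on the interval `[lo, hi]`, ending at the target of the arrow. -/
def IsCohook (n : ℕ) (ε : ℕ → Bool) (a lo hi : ℕ) : Prop :=
  if ε a = true then
    lo = a + 1 ∧ a + 1 ≤ hi ∧ hi ≤ n + 2 ∧ (∀ ℓ, a + 1 ≤ ℓ → ℓ < hi → ε ℓ = false) ∧
      (hi = n + 2 ∨ ε hi = true)
  else
    hi = a ∧ 1 ≤ lo ∧ lo ≤ a ∧ (∀ ℓ, lo ≤ ℓ → ℓ < a → ε ℓ = true) ∧
      (lo = 1 ∨ ε (lo - 1) = false)

/-- Counterclockwise neighbor `R⁻¹(ℓ)` of the vertex `ℓ` of the polygon `P(Q)`, for the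
cyclic order `0`, lower-barred vertices increasing, `n+2`, upper-barred vertices
decreasing. -/
def Rinv (n : ℕ) (ε : ℕ → Bool) (ℓ : ℕ) : ℕ :=
  if ℓ = n + 2 then sSup ({0} ∪ {x | 1 ≤ x ∧ x ≤ n + 1 ∧ ε x = true})
  else if 1 ≤ ℓ ∧ ℓ ≤ n + 1 ∧ ε ℓ = true then
    sSup ({0} ∪ {x | 1 ≤ x ∧ x < ℓ ∧ ε x = true})
  else
    sInf ({n + 2} ∪ {x | ℓ < x ∧ x ≤ n + 1 ∧ ε x = false})

/-- `γ(i′,j′)` is a pivot of `γ(i,j)`. -/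
def IsPivot (n : ℕ) (ε : ℕ → Bool) (i j i' j' : ℕ) : Prop :=
  (i' = Rinv n ε i ∧ j' = j ∧ Rinv n ε i < j) ∨
    (i' = i ∧ j' = Rinv n ε j ∧ i < Rinv n ε j)

/-! ### Geometry of the polygon `P(Q)`.

The plane is identified with `ℂ`; `p x` is the vertex of the polygon labeled `x`,
for `0 ≤ x ≤ n+2`. -/

/-- The hypotheses on the points `p 0, …, p (n+2)` realizing the polygon `P(Q)`:
strictly increasing `x`-coordinates; `p 0` and `p (n+2)` on a common horizontal line `L`;
upper-barred vertices above `L`, lower-barred vertices below `L`; convex position. -/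
def PolyPts (n : ℕ) (ε : ℕ → Bool) (p : ℕ → ℂ) : Prop :=
  (∀ a b, a < b → b ≤ n + 2 → (p a).re < (p b).re) ∧
    (p (n + 2)).im = (p 0).im ∧
    (∀ i, 1 ≤ i → i ≤ n + 1 →
      (ε i = true → (p 0).im < (p i).im) ∧ (ε i = false → (p i).im < (p 0).im)) ∧
    ∀ i, i ≤ n + 2 → p i ∉ convexHull ℝ (p '' {j | j ≤ n + 2 ∧ j ≠ i})

/-- The line segment `γ(e.1, e.2)` of the polygon. -/
def Seg (p : ℕ → ℂ) (e : ℕ × ℕ) : Set ℂ := segment ℝ (p e.1) (p e.2)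

/-- Two segments cross when they intersect in a point that is not a common endpoint. -/
def Cross (p : ℕ → ℂ) (e f : ℕ × ℕ) : Prop :=
  ∃ z, z ∈ Seg p e ∧ z ∈ Seg p f ∧
    ¬((z = p e.1 ∨ z = p e.2) ∧ (z = p f.1 ∨ z = p f.2))

/-- Slope of the segment `γ(e.1, e.2)`. -/
def slope (p : ℕ → ℂ) (e : ℕ × ℕ) : ℝ :=
  ((p e.2).im - (p e.1).im) / ((p e.2).re - (p e.1).re)

def ValidPair (n : ℕ) (e : ℕ × ℕ) : Prop := e.1 < e.2 ∧ e.2 ≤ n + 2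

/-- A triangulation of `P(Q)`: a maximal collection of pairwise noncrossing segments. -/
def IsTriangulation (n : ℕ) (p : ℕ → ℂ) (T : Finset (ℕ × ℕ)) : Prop :=
  (∀ e ∈ T, ValidPair n e) ∧ (∀ e ∈ T, ∀ f ∈ T, e ≠ f → ¬Cross p e f) ∧
    ∀ e, ValidPair n e → e ∉ T → ∃ f ∈ T, Cross p e f

/-- Cross product of two planar vectors; positive iff `(u, v)` is counterclockwise. -/
def cross2 (u v : ℂ) : ℝ := u.re * v.im - u.im * v.re

/-- Arrows of the adjacency quiver `Q(T)` of a triangulation `T`: `e → f` whenever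
`e` and `f` are sides of a common triangle of `T` and `f` follows `e` going
counterclockwise around that triangle. -/
def TriArrow (p : ℕ → ℂ) (T : Finset (ℕ × ℕ)) (e f : ℕ × ℕ) : Prop :=
  ∃ a b c : ℕ, a < b ∧ b < c ∧ (a, b) ∈ T ∧ (b, c) ∈ T ∧ (a, c) ∈ T ∧
    ((0 < cross2 (p b - p a) (p c - p a) ∧
        ((e = (a, b) ∧ f = (b, c)) ∨ (e = (b, c) ∧ f = (a, c)) ∨
          (e = (a, c) ∧ f = (a, b)))) ∨
      (cross2 (p b - p a) (p c - p a) < 0 ∧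
        ((e = (a, c) ∧ f = (b, c)) ∨ (e = (b, c) ∧ f = (a, b)) ∨
          (e = (a, b) ∧ f = (a, c)))))

/-! ### Representations of `Q` -/

/-- A finite dimensional representation of the quiver `Q` of type `A_{n+2}` over `k`.
The vector spaces are indexed by `ℕ`, and are required to vanish outside the set
`{1, …, n+2}` of vertices of `Q`.  For each `i`, `fwd i : V i → V (i+1)` is the structure
map of the arrow `i → i+1` (it is required to vanish when the arrow is oriented in the
other direction, i.e. `ε i = false`) and `bwd i : V (i+1) → V i` is the structure map of
the arrow `i+1 → i` (required to vanish when `ε i = true`). -/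
structure ARep (k : Type) [Field k] (n : ℕ) (ε : ℕ → Bool) where
  V : ℕ → Type
  [acg : ∀ x, AddCommGroup (V x)]
  [mod : ∀ x, Module k (V x)]
  [fdim : ∀ x, FiniteDimensional k (V x)]
  triv : ∀ x, x = 0 ∨ n + 2 < x → ∀ v : V x, v = 0
  fwd : ∀ i, V i →ₗ[k] V (i + 1)
  bwd : ∀ i, V (i + 1) →ₗ[k] V i
  fwd_zero : ∀ i, ε i = false → fwd i = 0
  bwd_zero : ∀ i, ε i = true → bwd i = 0

attribute [instance] ARep.acg ARep.mod ARep.fdim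

variable {k : Type} [Field k] {n : ℕ} {ε : ℕ → Bool}

/-- Morphisms of representations. -/
@[ext]
structure ARep.Hom (M N : ARep k n ε) where
  app : ∀ x, M.V x →ₗ[k] N.V x
  comm_fwd : ∀ i (v : M.V i), app (i + 1) (M.fwd i v) = N.fwd i (app i v)
  comm_bwd : ∀ i (v : M.V (i + 1)), app i (M.bwd i v) = N.bwd i (app (i + 1) v)

/-- The identity morphism. -/
def ARep.Hom.id (M : ARep k n ε) : M.Hom M :=
  ⟨fun _ => LinearMap.id, fun _ _ => rfl, fun _ _ => rfl⟩

/-- Composition of morphisms. -/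
def ARep.Hom.comp {M N P : ARep k n ε} (g : N.Hom P) (f : M.Hom N) : M.Hom P where
  app x := (g.app x).comp (f.app x)
  comm_fwd i v := by simp only [LinearMap.comp_apply, f.comm_fwd, g.comm_fwd]
  comm_bwd i v := by simp only [LinearMap.comp_apply, f.comm_bwd, g.comm_bwd]

/-- Sum of two morphisms. -/
def ARep.Hom.add {M N : ARep k n ε} (f g : M.Hom N) : M.Hom N where
  app x := f.app x + g.app x
  comm_fwd i v := by
    simp only [LinearMap.add_apply, f.comm_fwd, g.comm_fwd, map_add]
  comm_bwd i v := by
    simp only [LinearMap.add_apply, f.comm_bwd, g.comm_bwd, map_add]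

/-- Scalar multiple of a morphism. -/
def ARep.Hom.smul {M N : ARep k n ε} (c : k) (f : M.Hom N) : M.Hom N where
  app x := c • f.app x
  comm_fwd i v := by simp only [LinearMap.smul_apply, f.comm_fwd, map_smul]
  comm_bwd i v := by simp only [LinearMap.smul_apply, f.comm_bwd, map_smul]

/-- Isomorphism of representations. -/
def ARep.Iso (M N : ARep k n ε) : Prop :=
  ∃ f : M.Hom N, ∀ x, Function.Bijective (f.app x)

/-- The zero representation(s). -/
def ARep.IsZero (M : ARep k n ε) : Prop := ∀ x, ∀ v : M.V x, v = 0

/-- The support of a representation. -/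
def ARep.supp (M : ARep k n ε) : Set ℕ := {x | ∃ v : M.V x, v ≠ 0}

/-- Direct sum of two representations. -/
def ARep.dsum (M N : ARep k n ε) : ARep k n ε where
  V x := M.V x × N.V x
  acg _ := by infer_instance
  mod _ := by infer_instance
  fdim _ := by infer_instance
  triv x hx v := by
    have h1 := M.triv x hx v.1
    have h2 := N.triv x hx v.2
    exact Prod.ext h1 h2
  fwd i := (M.fwd i).prodMap (N.fwd i)
  bwd i := (M.bwd i).prodMap (N.bwd i)
  fwd_zero i h := by
    show (M.fwd i).prodMap (N.fwd i) = 0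
    rw [M.fwd_zero i h, N.fwd_zero i h]
    apply LinearMap.ext; rintro ⟨a, b⟩; simp
  bwd_zero i h := by
    show (M.bwd i).prodMap (N.bwd i) = 0
    rw [M.bwd_zero i h, N.bwd_zero i h]
    apply LinearMap.ext; rintro ⟨a, b⟩; simp

/-- One dimensional space `k` if `P` holds, `0` otherwise (as a submodule of `k`). -/
def fiber (k : Type) [Field k] (P : Prop) : Submodule k k := if P then ⊤ else ⊥

/-- The canonical map `fiber k P → fiber k Q` : "identity" if `P ∧ Q`, zero otherwise. -/
def fiberMap (k : Type) [Field k] (P Q : Prop) : fiber k P →ₗ[k] fiber k Q :=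
  if h : P ∧ Q then
    { toFun := fun v => ⟨(v : k), by
        rw [show fiber k Q = ⊤ from if_pos h.2]; exact Submodule.mem_top⟩
      map_add' := fun _ _ => rfl
      map_smul' := fun _ _ => rfl }
  else 0

/-- The zero representation. -/
def zeroRep (k : Type) [Field k] (n : ℕ) (ε : ℕ → Bool) : ARep k n ε where
  V _ := ↥(fiber k False)
  acg _ := by infer_instance
  mod _ := by infer_instance
  fdim _ := by infer_instance
  triv x _ v := by
    have hfib : fiber k False = ⊥ := if_neg (fun h : False => h.elim)
    obtain ⟨w, hw⟩ := v
    apply Subtype.ext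
    have hb : w ∈ (⊥ : Submodule k k) := hfib ▸ hw
    exact (Submodule.mem_bot k).1 hb
  fwd _ := 0
  bwd _ := 0
  fwd_zero _ _ := rfl
  bwd_zero _ _ := rfl

/-- The condition for a vertex `x` to be in the support of the interval representation
`M(i,j)`. -/
def SuppCond (n i j x : ℕ) : Prop := i ≤ x ∧ x ≤ j ∧ 1 ≤ x ∧ x ≤ n + 2

/-- The interval (string) representation `M(i,j)` of `Q`: one dimensional at each vertex
`x` with `i ≤ x ≤ j`, zero elsewhere, with identity maps on all arrows whose endpoints
both lie in `[i,j]`. -/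
def intervalRep (k : Type) [Field k] (n : ℕ) (ε : ℕ → Bool) (i j : ℕ) : ARep k n ε where
  V x := ↥(fiber k (SuppCond n i j x))
  acg _ := by infer_instance
  mod _ := by infer_instance
  fdim _ := by infer_instance
  triv x hx v := by
    have hP : ¬SuppCond n i j x := by simp only [SuppCond]; omega
    have hfib : fiber k (SuppCond n i j x) = ⊥ := if_neg hP
    obtain ⟨w, hw⟩ := v
    apply Subtype.ext
    have hb : w ∈ (⊥ : Submodule k k) := hfib ▸ hw
    exact (Submodule.mem_bot k).1 hb
  fwd ℓ :=
    if ε ℓ = true then fiberMap k (SuppCond n i j ℓ) (SuppCond n i j (ℓ + 1)) else 0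
  bwd ℓ :=
    if ε ℓ = true then 0 else fiberMap k (SuppCond n i j (ℓ + 1)) (SuppCond n i j ℓ)
  fwd_zero ℓ h := by simp [h]
  bwd_zero ℓ h := by simp [h]

/-- Direct sum of a list of representations. -/
def dsumList (k : Type) [Field k] (n : ℕ) (ε : ℕ → Bool) :
    List (ARep k n ε) → ARep k n ε
  | [] => zeroRep k n ε
  | M :: L => M.dsum (dsumList k n ε L)

/-- Indecomposable representations. -/
def ARep.Indec (M : ARep k n ε) : Prop :=
  ¬M.IsZero ∧ ∀ A B : ARep k n ε, M.Iso (A.dsum B) → A.IsZero ∨ B.IsZero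

/-- `A` is a direct summand of `T`. -/
def ARep.IsSummand (A T : ARep k n ε) : Prop := ∃ B : ARep k n ε, T.Iso (A.dsum B)

/-- A representation is basic when it has no repeated indecomposable direct summand. -/
def ARep.Basic (T : ARep k n ε) : Prop :=
  ∀ A : ARep k n ε, A.Indec → ¬(A.dsum A).IsSummand T

/-- A short exact sequence `0 → B → E → A → 0`. -/
structure SES (B A : ARep k n ε) where
  E : ARep k n ε
  ι : B.Hom E
  π : E.Hom A
  inj : ∀ x, Function.Injective (ι.app x)
  surj : ∀ x, Function.Surjective (π.app x)
  exct : ∀ x (v : E.V x), π.app x v = 0 ↔ ∃ u, ι.app x u = v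

/-- A short exact sequence splits. -/
def SES.Splits {B A : ARep k n ε} (σ : SES B A) : Prop :=
  ∃ r : σ.E.Hom B, ∀ x (v : B.V x), r.app x (σ.ι.app x v) = v

/-- `Ext¹(A, B) = 0` : every short exact sequence `0 → B → E → A → 0` splits. -/
def ExtZero (A B : ARep k n ε) : Prop := ∀ σ : SES B A, σ.Splits

/-- `Ext¹(A,B) ≅ k`, generated by (the class of) a short exact sequence
`0 → B → E → A → 0` with indecomposable middle term `E`: there is a non-split such
sequence `σ` with `σ.E` indecomposable such that every non-split sequence is equivalent
to a nonzero scalar multiple of `σ`. -/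
def ExtOneDimIndecMid (A B : ARep k n ε) : Prop :=
  ∃ σ : SES B A, ¬σ.Splits ∧ σ.E.Indec ∧
    ∀ τ : SES B A, ¬τ.Splits → ∃ c : k, c ≠ 0 ∧
      ∃ φ : σ.E.Hom τ.E, (∀ x, Function.Bijective (φ.app x)) ∧
        (∀ x (v : B.V x), φ.app x (σ.ι.app x v) = τ.ι.app x v) ∧
        (∀ x (v : σ.E.V x), τ.π.app x (φ.app x v) = c • σ.π.app x v)

/-- Almost rigid representations. -/
def AlmostRigid (T : ARep k n ε) : Prop :=
  T.Basic ∧ ∀ A B : ARep k n ε, A.Indec → B.Indec → A.IsSummand T → B.IsSummand T →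
    ExtZero A B ∨ ExtOneDimIndecMid A B

/-- Maximal almost rigid representations. -/
def MaxAlmostRigid (T : ARep k n ε) : Prop :=
  AlmostRigid T ∧ ∀ M : ARep k n ε, ¬M.IsZero → ¬AlmostRigid (T.dsum M)

/-- `f` is a section. -/
def ARep.Hom.IsSection {M N : ARep k n ε} (f : M.Hom N) : Prop :=
  ∃ g : N.Hom M, ∀ x (v : M.V x), g.app x (f.app x v) = v

/-- `f` is a retraction. -/
def ARep.Hom.IsRetraction {M N : ARep k n ε} (f : M.Hom N) : Prop :=
  ∃ g : N.Hom M, ∀ x (v : N.V x), f.app x (g.app x v) = v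

/-- Irreducible morphisms: `f` is neither a section nor a retraction, and in every
factorization `f = g ∘ h` either `h` is a section or `g` is a retraction. -/
def ARep.Hom.Irred {M N : ARep k n ε} (f : M.Hom N) : Prop :=
  ¬f.IsSection ∧ ¬f.IsRetraction ∧
    ∀ (Z : ARep k n ε) (h : M.Hom Z) (g : Z.Hom N),
      (∀ x (v : M.V x), f.app x v = g.app x (h.app x v)) → h.IsSection ∨ g.IsRetraction

/-- Subrepresentations : families of subspaces closed under the structure maps. -/
structure Subrep (M : ARep k n ε) where
  U : ∀ x, Submodule k (M.V x)
  fwd_mem : ∀ i, ∀ v ∈ U i, M.fwd i v ∈ U (i + 1)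
  bwd_mem : ∀ i, ∀ v ∈ U (i + 1), M.bwd i v ∈ U i

/-- The central charge `Z(M) = Σ_{x=1}^{n+2} dim_k(M_x) · (p_x − p_{x−1})`. -/
def charge (p : ℕ → ℂ) (M : ARep k n ε) : ℂ :=
  ∑ x ∈ Finset.Icc 1 (n + 2), (Module.finrank k (M.V x) : ℂ) * (p x - p (x - 1))

/-- The central charge of a subrepresentation. -/
def subCharge (p : ℕ → ℂ) {M : ARep k n ε} (L : Subrep M) : ℂ :=
  ∑ x ∈ Finset.Icc 1 (n + 2), (Module.finrank k (L.U x) : ℂ) * (p x - p (x - 1))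

/-- The representation `F(T) = ⊕_{γ(a,b) ∈ T} M(a+1, b)` attached to a collection `T` of
segments of the polygon `P(Q)`. -/
def FRep (k : Type) [Field k] (n : ℕ) (ε : ℕ → Bool) (T : Finset (ℕ × ℕ)) : ARep k n ε :=
  dsumList k n ε (T.toList.map fun e => intervalRep k n ε (e.1 + 1) e.2)

end CambrianA

namespace CambrianA

/-- A diagonal of `P(Q)` : a valid segment which is not a boundary edge. -/
def Diagonal (n : ℕ) (ε : ℕ → Bool) (e : ℕ × ℕ) : Prop :=
  ValidPair n e ∧ ¬BoundaryEdge n ε e.1 e.2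

/-- The covering relation of the Cambrian lattice on triangulations: `T₁` is covered by
`T₂` when they differ by a single diagonal flip which increases the slope. -/
def TriCovers (n : ℕ) (ε : ℕ → Bool) (p : ℕ → ℂ) (T1 T2 : Finset (ℕ × ℕ)) : Prop :=
  ∃ e1 e2 : ℕ × ℕ, e1 ≠ e2 ∧ Diagonal n ε e1 ∧ Diagonal n ε e2 ∧
    e1 ∈ T1 ∧ e2 ∈ T2 ∧ T1.erase e1 = T2.erase e2 ∧ slope p e1 < slope p e2

variable {k : Type} [Field k] {n : ℕ} {ε : ℕ → Bool}

/-- The covering relation on maximal almost rigid representations: `T₁` is covered by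
`T₂` when there are indecomposable summands `Mᵢ` of `Tᵢ` with `T₁/M₁ ≅ T₂/M₂` (common
complement `C`) and a non-split short exact sequence `0 → M₁ → E ⊕ E′ → M₂ → 0` whose
middle terms `E, E′` are indecomposable summands of `T₁/M₁ ≅ C`. -/
def MarCovers (T1 T2 : ARep k n ε) : Prop :=
  ∃ M1 M2 C : ARep k n ε, M1.Indec ∧ M2.Indec ∧
    T1.Iso (M1.dsum C) ∧ T2.Iso (M2.dsum C) ∧
    ∃ σ : SES M1 M2, ¬σ.Splits ∧ ∃ E E' : ARep k n ε, E.Indec ∧ E'.Indec ∧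
      E.IsSummand C ∧ E'.IsSummand C ∧ σ.E.Iso (E.dsum E')

/-! ### Isomorphisms -/

theorem ARep.Hom.exists_inv {M N : ARep k n ε} (f : M.Hom N)
    (hf : ∀ x, Function.Bijective (f.app x)) :
    ∃ g : N.Hom M, (∀ x v, g.app x (f.app x v) = v) ∧ (∀ x v, f.app x (g.app x v) = v) := by
  let e : ∀ x, M.V x ≃ₗ[k] N.V x := fun x => LinearEquiv.ofBijective (f.app x) (hf x)
  have he : ∀ x v, e x v = f.app x v := fun x v => rfl
  refine ⟨⟨fun x => (e x).symm, ?_, ?_⟩, ?_, ?_⟩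
  · intro i v
    apply (e (i + 1)).injective
    have h1 : f.app i ((e i).symm v) = v := (e i).apply_symm_apply v
    simp only [LinearEquiv.coe_coe, LinearEquiv.apply_symm_apply]
    rw [he, f.comm_fwd, h1]
  · intro i v
    apply (e i).injective
    have h1 : f.app (i + 1) ((e (i + 1)).symm v) = v := (e (i + 1)).apply_symm_apply v
    simp only [LinearEquiv.coe_coe, LinearEquiv.apply_symm_apply]
    rw [he, f.comm_bwd, h1]
  · intro x v
    exact (e x).symm_apply_apply v
  · intro x v
    exact (e x).apply_symm_apply v

theorem ARep.Iso.mk' {M N : ARep k n ε} (f : M.Hom N) (g : N.Hom M)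
    (h1 : ∀ x v, g.app x (f.app x v) = v) (h2 : ∀ x v, f.app x (g.app x v) = v) :
    M.Iso N :=
  ⟨f, fun x => Function.bijective_iff_has_inverse.2 ⟨g.app x, h1 x, h2 x⟩⟩

theorem ARep.Iso.refl (M : ARep k n ε) : M.Iso M :=
  ⟨ARep.Hom.id M, fun _ => Function.bijective_id⟩

theorem ARep.Iso.symm {M N : ARep k n ε} (h : M.Iso N) : N.Iso M := by
  obtain ⟨f, hf⟩ := h
  obtain ⟨g, h1, h2⟩ := f.exists_inv hf
  exact ARep.Iso.mk' g f h2 h1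

theorem ARep.Iso.trans {M N P : ARep k n ε} (h : M.Iso N) (h' : N.Iso P) : M.Iso P := by
  obtain ⟨f, hf⟩ := h
  obtain ⟨g, hg⟩ := h'
  exact ⟨g.comp f, fun x => (hg x).comp (hf x)⟩

theorem ARep.Iso.isZero {M N : ARep k n ε} (h : M.Iso N) (hM : M.IsZero) : N.IsZero := by
  obtain ⟨f, hf⟩ := h
  intro x v
  obtain ⟨u, rfl⟩ := (hf x).2 v
  rw [hM x u, map_zero]

/-- First projection. -/
def pr1 (M N : ARep k n ε) : (M.dsum N).Hom M where
  app x := LinearMap.fst k (M.V x) (N.V x)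
  comm_fwd _ _ := rfl
  comm_bwd _ _ := rfl

/-- Second projection. -/
def pr2 (M N : ARep k n ε) : (M.dsum N).Hom N where
  app x := LinearMap.snd k (M.V x) (N.V x)
  comm_fwd _ _ := rfl
  comm_bwd _ _ := rfl

/-- First inclusion. -/
def in1 (M N : ARep k n ε) : M.Hom (M.dsum N) where
  app x := LinearMap.inl k (M.V x) (N.V x)
  comm_fwd i _ := Prod.ext rfl (map_zero (N.fwd i)).symm
  comm_bwd i _ := Prod.ext rfl (map_zero (N.bwd i)).symm

/-- Second inclusion. -/
def in2 (M N : ARep k n ε) : N.Hom (M.dsum N) where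
  app x := LinearMap.inr k (M.V x) (N.V x)
  comm_fwd i _ := Prod.ext (map_zero (M.fwd i)).symm rfl
  comm_bwd i _ := Prod.ext (map_zero (M.bwd i)).symm rfl

/-- Pairing of two morphisms. -/
def pairH {P M N : ARep k n ε} (f : P.Hom M) (g : P.Hom N) : P.Hom (M.dsum N) where
  app x := (f.app x).prod (g.app x)
  comm_fwd i v := Prod.ext (f.comm_fwd i v) (g.comm_fwd i v)
  comm_bwd i v := Prod.ext (f.comm_bwd i v) (g.comm_bwd i v)

/-- Copairing of two morphisms. -/
def copairH {P M N : ARep k n ε} (f : M.Hom P) (g : N.Hom P) : (M.dsum N).Hom P where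
  app x := (f.app x).coprod (g.app x)
  comm_fwd i v := by
    change f.app (i + 1) (M.fwd i v.1) + g.app (i + 1) (N.fwd i v.2) =
      P.fwd i (f.app i v.1 + g.app i v.2)
    rw [f.comm_fwd, g.comm_fwd, map_add]
  comm_bwd i v := by
    change f.app i (M.bwd i v.1) + g.app i (N.bwd i v.2) =
      P.bwd i (f.app (i + 1) v.1 + g.app (i + 1) v.2)
    rw [f.comm_bwd, g.comm_bwd, map_add]

theorem copairH_app {P M N : ARep k n ε} (f : M.Hom P) (g : N.Hom P) (x : ℕ)
    (v : (M.dsum N).V x) : (copairH f g).app x v = f.app x v.1 + g.app x v.2 := rfl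

theorem ARep.Iso.dsum {M N M' N' : ARep k n ε} (h : M.Iso M') (h' : N.Iso N') :
    (M.dsum N).Iso (M'.dsum N') := by
  obtain ⟨f, hf⟩ := h
  obtain ⟨g, hg⟩ := h'
  refine ⟨pairH (f.comp (pr1 M N)) (g.comp (pr2 M N)), fun x => ?_⟩
  exact Function.Bijective.prodMap (hf x) (hg x)

theorem dsum_comm (M N : ARep k n ε) : (M.dsum N).Iso (N.dsum M) :=
  ARep.Iso.mk' (pairH (pr2 M N) (pr1 M N)) (pairH (pr2 N M) (pr1 N M))
    (fun _ _ => rfl) (fun _ _ => rfl)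

theorem dsum_assoc (M N P : ARep k n ε) :
    ((M.dsum N).dsum P).Iso (M.dsum (N.dsum P)) :=
  ARep.Iso.mk'
    (pairH ((pr1 M N).comp (pr1 _ P)) (pairH ((pr2 M N).comp (pr1 _ P)) (pr2 _ P)))
    (pairH (pairH (pr1 M _) ((pr1 N P).comp (pr2 M _))) ((pr2 N P).comp (pr2 M _)))
    (fun _ _ => rfl) (fun _ _ => rfl)

theorem zero_dsum {M N : ARep k n ε} (hM : M.IsZero) : (M.dsum N).Iso N :=
  ARep.Iso.mk' (pr2 M N) (in2 M N)
    (fun x v => Prod.ext (hM x v.1).symm rfl) (fun _ _ => rfl)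

theorem dsum_zero {M N : ARep k n ε} (hN : N.IsZero) : (M.dsum N).Iso M :=
  (dsum_comm M N).trans (zero_dsum hN)

theorem dsum_isZero {M N : ARep k n ε} (h : (M.dsum N).IsZero) : M.IsZero ∧ N.IsZero := by
  constructor
  · intro x v
    have := h x (v, 0)
    exact congrArg Prod.fst this
  · intro x v
    have := h x (0, v)
    exact congrArg Prod.snd this

theorem isZero_dsum {M N : ARep k n ε} (h : M.IsZero) (h' : N.IsZero) :
    (M.dsum N).IsZero := fun x v => Prod.ext (h x v.1) (h' x v.2)

theorem zeroRep_isZero : (zeroRep k n ε).IsZero := by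
  intro x v
  have hfib : fiber k False = ⊥ := if_neg (fun h : False => h.elim)
  obtain ⟨w, hw⟩ := v
  apply Subtype.ext
  have hb : w ∈ (⊥ : Submodule k k) := hfib ▸ hw
  exact (Submodule.mem_bot k).1 hb

theorem ARep.Iso.indec {M N : ARep k n ε} (h : M.Iso N) (hM : M.Indec) : N.Indec :=
  ⟨fun hz => hM.1 (h.symm.isZero hz), fun A B hAB => hM.2 A B (h.trans hAB)⟩

theorem ARep.IsSummand.of_iso {A A' T T' : ARep k n ε} (h : A.IsSummand T) (hA : A.Iso A')
    (hT : T.Iso T') : A'.IsSummand T' := by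
  obtain ⟨B, hB⟩ := h
  exact ⟨B, (hT.symm.trans hB).trans (hA.dsum (ARep.Iso.refl B))⟩

/-! ### Splitting off summands -/

/-- Kernel of a morphism. -/
def kerRep {M N : ARep k n ε} (g : M.Hom N) : ARep k n ε where
  V x := ↥(LinearMap.ker (g.app x))
  acg _ := by infer_instance
  mod _ := by infer_instance
  fdim _ := by infer_instance
  triv x hx v := Subtype.ext (M.triv x hx v.1)
  fwd i := (M.fwd i).restrict (p := LinearMap.ker (g.app i))
    (q := LinearMap.ker (g.app (i + 1))) (fun v hv => by
      have hv' : g.app i v = 0 := hv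
      change g.app (i + 1) (M.fwd i v) = 0
      rw [g.comm_fwd, hv', map_zero])
  bwd i := (M.bwd i).restrict (p := LinearMap.ker (g.app (i + 1)))
    (q := LinearMap.ker (g.app i)) (fun v hv => by
      have hv' : g.app (i + 1) v = 0 := hv
      change g.app i (M.bwd i v) = 0
      rw [g.comm_bwd, hv', map_zero])
  fwd_zero i h := by
    apply LinearMap.ext
    intro v
    apply Subtype.ext
    change M.fwd i v.1 = 0
    rw [M.fwd_zero i h]; rfl
  bwd_zero i h := by
    apply LinearMap.ext
    intro v
    apply Subtype.ext
    change M.bwd i v.1 = 0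
    rw [M.bwd_zero i h]; rfl

/-- Inclusion of the kernel. -/
def kerIncl {M N : ARep k n ε} (g : M.Hom N) : (kerRep g).Hom M where
  app x := (LinearMap.ker (g.app x)).subtype
  comm_fwd _ _ := rfl
  comm_bwd _ _ := rfl

theorem iso_dsum_ker {I X : ARep k n ε} (f : I.Hom X) (g : X.Hom I)
    (h : ∀ x v, g.app x (f.app x v) = v) : X.Iso (I.dsum (kerRep g)) := by
  refine ARep.Iso.symm ⟨copairH f (kerIncl g), fun x => ⟨?_, ?_⟩⟩
  · refine (injective_iff_map_eq_zero ((copairH f (kerIncl g)).app x)).2 ?_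
    rintro ⟨u, ⟨w, hw⟩⟩ h0
    have h0' : f.app x u + w = 0 := h0
    have hw' : g.app x w = 0 := hw
    have h1 : u = 0 := by
      have := congrArg (g.app x) h0'
      rwa [map_add, h, hw', add_zero, map_zero] at this
    have h2 : w = 0 := by
      rwa [h1, map_zero, zero_add] at h0'
    subst h1
    exact Prod.ext rfl (Subtype.ext h2)
  · intro v
    refine ⟨(g.app x v, ⟨v - f.app x (g.app x v), ?_⟩), ?_⟩
    · rw [LinearMap.mem_ker, map_sub, h, sub_self]
    · change f.app x (g.app x v) + (v - f.app x (g.app x v)) = v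
      abel

/-! ### Interval representations -/

/-- The interval representation attached to the segment `γ(e.1, e.2)`. -/
abbrev IR (k : Type) [Field k] (n : ℕ) (ε : ℕ → Bool) (e : ℕ × ℕ) : ARep k n ε :=
  intervalRep k n ε (e.1 + 1) e.2

/-- Support condition. -/
def Ins (n : ℕ) (e : ℕ × ℕ) (x : ℕ) : Prop := SuppCond n (e.1 + 1) e.2 x

theorem Ins_iff {e : ℕ × ℕ} (he : ValidPair n e) (x : ℕ) : Ins n e x ↔ e.1 < x ∧ x ≤ e.2 := by
  unfold Ins SuppCond
  obtain ⟨h1, h2⟩ := he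
  omega

/-- Coordinate function. -/
def cf (e : ℕ × ℕ) (x : ℕ) : (IR k n ε e).V x →ₗ[k] k :=
  (fiber k (SuppCond n (e.1 + 1) e.2 x)).subtype

/-- Canonical generator. -/
def gv (e : ℕ × ℕ) (x : ℕ) : (IR k n ε e).V x :=
  ⟨if SuppCond n (e.1 + 1) e.2 x then 1 else 0, by
    by_cases h : SuppCond n (e.1 + 1) e.2 x
    · rw [show fiber k (SuppCond n (e.1 + 1) e.2 x) = ⊤ from if_pos h]; exact Submodule.mem_top
    · rw [if_neg h]; exact Submodule.zero_mem _⟩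

theorem cf_inj {e : ℕ × ℕ} {x : ℕ} {u v : (IR k n ε e).V x} (h : cf e x u = cf e x v) :
    u = v := Subtype.ext h

theorem cf_gv (e : ℕ × ℕ) (x : ℕ) :
    cf e x (gv e x : (IR k n ε e).V x) = if Ins n e x then 1 else 0 := rfl

theorem cf_zero {e : ℕ × ℕ} {x : ℕ} (h : ¬Ins n e x) (u : (IR k n ε e).V x) :
    cf e x u = 0 := by
  have hfib : fiber k (SuppCond n (e.1 + 1) e.2 x) = ⊥ := if_neg h
  obtain ⟨w, hw⟩ := u
  have hb : w ∈ (⊥ : Submodule k k) := hfib ▸ hw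
  exact (Submodule.mem_bot k).1 hb

theorem eq_smul_gv {e : ℕ × ℕ} {x : ℕ} (u : (IR k n ε e).V x) : u = cf e x u • gv e x := by
  apply cf_inj
  rw [map_smul, cf_gv]
  split_ifs with h
  · simp
  · simp [cf_zero h]

theorem gv_zero {e : ℕ × ℕ} {x : ℕ} (h : ¬Ins n e x) : (gv e x : (IR k n ε e).V x) = 0 := by
  apply cf_inj
  rw [cf_gv, if_neg h, map_zero]

theorem fiberMap_coe (P Q : Prop) (v : fiber k P) :
    ((fiberMap k P Q v : fiber k Q) : k) = if Q then (v : k) else 0 := by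
  unfold fiberMap
  by_cases hP : P
  · by_cases hQ : Q
    · simp [hP, hQ]
    · simp [hQ]
  · have : (v : k) = 0 := by
      have hfib : fiber k P = ⊥ := if_neg hP
      obtain ⟨w, hw⟩ := v
      have hb : w ∈ (⊥ : Submodule k k) := hfib ▸ hw
      exact (Submodule.mem_bot k).1 hb
    simp [hP, this]

theorem cf_fwd (e : ℕ × ℕ) (i : ℕ) (u : (IR k n ε e).V i) :
    cf e (i + 1) ((IR k n ε e).fwd i u) =
      if ε i = true ∧ Ins n e (i + 1) then cf e i u else 0 := by
  by_cases h : ε i = true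
  · have : (IR k n ε e).fwd i =
        fiberMap k (SuppCond n (e.1 + 1) e.2 i) (SuppCond n (e.1 + 1) e.2 (i + 1)) :=
      if_pos h
    rw [this]
    simp only [h, true_and]
    exact fiberMap_coe _ _ _
  · rw [(IR k n ε e).fwd_zero i (by simpa using h)]
    simp [h]

theorem cf_bwd (e : ℕ × ℕ) (i : ℕ) (u : (IR k n ε e).V (i + 1)) :
    cf e i ((IR k n ε e).bwd i u) =
      if ε i = false ∧ Ins n e i then cf e (i + 1) u else 0 := by
  by_cases h : ε i = true
  · rw [(IR k n ε e).bwd_zero i h]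
    simp [h]
  · have : (IR k n ε e).bwd i =
        fiberMap k (SuppCond n (e.1 + 1) e.2 (i + 1)) (SuppCond n (e.1 + 1) e.2 i) :=
      if_neg h
    rw [this]
    have h' : ε i = false := by simpa using h
    simp only [h', true_and]
    exact fiberMap_coe _ _ _

theorem fwd_gv (e : ℕ × ℕ) (i : ℕ) (h : ε i = true) (hi : Ins n e i) :
    (IR k n ε e).fwd i (gv e i) = gv e (i + 1) := by
  apply cf_inj
  rw [cf_fwd, cf_gv, cf_gv]
  simp [h, hi]

theorem bwd_gv (e : ℕ × ℕ) (i : ℕ) (h : ε i = false) (hi : Ins n e (i + 1)) :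
    (IR k n ε e).bwd i (gv e (i + 1)) = gv e i := by
  apply cf_inj
  rw [cf_bwd, cf_gv, cf_gv]
  simp [h, hi]

/-- Morphism out of an interval representation given by a family of vectors. -/
def homFrom (e : ℕ × ℕ) (X : ARep k n ε) (v : ∀ x, X.V x)
    (h1 : ∀ i, ε i = true → Ins n e i →
      X.fwd i (v i) = if Ins n e (i + 1) then v (i + 1) else 0)
    (h2 : ∀ i, ε i = false → Ins n e (i + 1) →
      X.bwd i (v (i + 1)) = if Ins n e i then v i else 0) : (IR k n ε e).Hom X where
  app x := (cf e x).smulRight (v x)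
  comm_fwd i u := by
    simp only [LinearMap.smulRight_apply, map_smul]
    rw [cf_fwd]
    by_cases h : ε i = true
    · by_cases hi : Ins n e i
      · rw [h1 i h hi]
        by_cases hj : Ins n e (i + 1) <;> simp [h, hj]
      · simp [cf_zero hi]
    · rw [X.fwd_zero i (by simpa using h)]
      simp [h]
  comm_bwd i u := by
    simp only [LinearMap.smulRight_apply, map_smul]
    rw [cf_bwd]
    by_cases h : ε i = false
    · by_cases hi : Ins n e (i + 1)
      · rw [h2 i h hi]
        by_cases hj : Ins n e i <;> simp [h, hj]
      · simp [cf_zero hi]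
    · rw [X.bwd_zero i (by simpa using h)]
      simp [h]

theorem homFrom_app (e : ℕ × ℕ) (X : ARep k n ε) (v : ∀ x, X.V x) (h1 h2) (x : ℕ)
    (u : (IR k n ε e).V x) : (homFrom e X v h1 h2).app x u = cf e x u • v x := rfl

/-- Morphism into an interval representation given by a family of functionals. -/
def homTo (e : ℕ × ℕ) (X : ARep k n ε) (φ : ∀ x, X.V x →ₗ[k] k)
    (h0 : ∀ x, ¬Ins n e x → φ x = 0)
    (h1 : ∀ i, ε i = true → Ins n e (i + 1) → ∀ u, φ (i + 1) (X.fwd i u) = φ i u)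
    (h2 : ∀ i, ε i = false → Ins n e i → ∀ u, φ i (X.bwd i u) = φ (i + 1) u) :
    X.Hom (IR k n ε e) where
  app x := (φ x).smulRight (gv e x)
  comm_fwd i u := by
    apply cf_inj
    rw [cf_fwd]
    simp only [LinearMap.smulRight_apply, map_smul, cf_gv]
    by_cases h : ε i = true
    · by_cases hj : Ins n e (i + 1)
      · rw [h1 i h hj]
        by_cases hi : Ins n e i
        · simp [h, hj, hi]
        · simp [h0 i hi]
      · simp [hj]
    · rw [X.fwd_zero i (by simpa using h)]
      simp [h]
  comm_bwd i u := by
    apply cf_inj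
    rw [cf_bwd]
    simp only [LinearMap.smulRight_apply, map_smul, cf_gv]
    by_cases h : ε i = false
    · by_cases hj : Ins n e i
      · rw [h2 i h hj]
        by_cases hi : Ins n e (i + 1)
        · simp [h, hj, hi]
        · simp [h0 (i + 1) hi]
      · simp [hj]
    · rw [X.bwd_zero i (by simpa using h)]
      simp [h]

theorem cf_homTo (e : ℕ × ℕ) (X : ARep k n ε) (φ : ∀ x, X.V x →ₗ[k] k) (h0 h1 h2) (x : ℕ)
    (u : X.V x) : cf e x ((homTo e X φ h0 h1 h2).app x u) = φ x u := by
  change cf e x (φ x u • gv e x) = φ x u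
  rw [map_smul, cf_gv]
  by_cases h : Ins n e x
  · simp [h]
  · simp [h0 x h]

theorem IR_not_isZero {e : ℕ × ℕ} (he : ValidPair n e) : ¬(IR k n ε e).IsZero := by
  intro h
  have h1 := congrArg (cf e e.2) (h e.2 (gv e e.2))
  have h2 : Ins n e e.2 := (Ins_iff he _).2 ⟨he.1, le_rfl⟩
  rw [cf_gv, if_pos h2, map_zero] at h1
  exact one_ne_zero h1


/-! ### Existence of decompositions into interval representations -/

theorem exists_functional {V : Type} [AddCommGroup V] [Module k V] (W : Submodule k V) (v : V)
    (hv : v ∉ W) : ∃ ψ : V →ₗ[k] k, ψ v = 1 ∧ ∀ w ∈ W, ψ w = 0 := by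
  obtain ⟨f, hf, hW⟩ := Submodule.exists_le_ker_of_notMem hv
  refine ⟨(f v)⁻¹ • f, by simp [hf], fun w hw => ?_⟩
  have : f w = 0 := hW hw
  simp [this]

theorem exists_factor {V V' : Type} [AddCommGroup V] [Module k V] [AddCommGroup V'] [Module k V']
    (α : V →ₗ[k] V') (W : Submodule k V') (φ : V →ₗ[k] k)
    (h : ∀ u, α u ∈ W → φ u = 0) :
    ∃ ψ : V' →ₗ[k] k, (∀ w ∈ W, ψ w = 0) ∧ ∀ u, ψ (α u) = φ u := by
  have h1 : φ ∈ (LinearMap.ker (W.mkQ.comp α)).dualAnnihilator := by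
    rw [Submodule.mem_dualAnnihilator]
    intro u hu
    apply h
    have : W.mkQ (α u) = 0 := hu
    simpa using this
  rw [← LinearMap.range_dualMap_eq_dualAnnihilator_ker] at h1
  obtain ⟨χ, hχ⟩ := h1
  refine ⟨χ.comp W.mkQ, fun w hw => ?_, fun u => ?_⟩
  · have : W.mkQ w = 0 := by simpa using hw
    simp [this]
  · rw [← hχ]; rfl

/-- A partial string of vectors and functionals on `[i, m]`. -/
structure Str (X : ARep k n ε) (i m : ℕ) (v : ∀ x, X.V x) (φ : ∀ x, X.V x →ₗ[k] k) : Prop where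
  v0 : ∀ x, x < i ∨ m < x → v x = 0
  f0 : ∀ x, x < i ∨ m < x → φ x = 0
  fv : ∀ l, ε l = true → i ≤ l → l < m → X.fwd l (v l) = v (l + 1)
  ff : ∀ l, ε l = true → l < m → ∀ u, φ (l + 1) (X.fwd l u) = φ l u
  bv : ∀ l, ε l = false → l < m → X.bwd l (v (l + 1)) = v l
  bf : ∀ l, ε l = false → i ≤ l → l < m → ∀ u, φ l (X.bwd l u) = φ (l + 1) u
  pair : ∀ x, i ≤ x → x ≤ m → φ x (v x) = 1

theorem Str.extend {X : ARep k n ε} {i m : ℕ} {v : ∀ x, X.V x} {φ : ∀ x, X.V x →ₗ[k] k}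
    (h : Str X i m v φ) (him : i ≤ m) (u : X.V (m + 1)) (ψ : X.V (m + 1) →ₗ[k] k)
    (h1 : ε m = true → X.fwd m (v m) = u ∧ ∀ w, ψ (X.fwd m w) = φ m w)
    (h2 : ε m = false → X.bwd m u = v m ∧ ∀ w, φ m (X.bwd m w) = ψ w) (h3 : ψ u = 1) :
    Str X i (m + 1) (Function.update v (m + 1) u) (Function.update φ (m + 1) ψ) := by
  have ev : ∀ x, x ≠ m + 1 → Function.update v (m + 1) u x = v x :=
    fun x hx => Function.update_of_ne hx _ _
  have ef : ∀ x, x ≠ m + 1 → Function.update φ (m + 1) ψ x = φ x :=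
    fun x hx => Function.update_of_ne hx _ _
  have ev' : Function.update v (m + 1) u (m + 1) = u := Function.update_self _ _ _
  have ef' : Function.update φ (m + 1) ψ (m + 1) = ψ := Function.update_self _ _ _
  constructor
  · intro x hx
    rw [ev x (by omega)]
    exact h.v0 x (by omega)
  · intro x hx
    rw [ef x (by omega)]
    exact h.f0 x (by omega)
  · intro l hl hil hlm
    rw [ev l (by omega)]
    by_cases hm : l = m
    · subst hm
      rw [ev']; exact (h1 hl).1
    · rw [ev (l + 1) (by omega)]
      exact h.fv l hl hil (by omega)
  · intro l hl hlm w
    rw [ef l (by omega)]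
    by_cases hm : l = m
    · subst hm
      rw [ef']; exact (h1 hl).2 w
    · rw [ef (l + 1) (by omega)]
      exact h.ff l hl (by omega) w
  · intro l hl hlm
    rw [ev l (by omega)]
    by_cases hm : l = m
    · subst hm
      rw [ev']; exact (h2 hl).1
    · rw [ev (l + 1) (by omega)]
      exact h.bv l hl (by omega)
  · intro l hl hil hlm w
    rw [ef l (by omega)]
    by_cases hm : l = m
    · subst hm
      rw [ef']; exact (h2 hl).2 w
    · rw [ef (l + 1) (by omega)]
      exact h.bf l hl hil (by omega) w
  · intro x hix hxm
    by_cases hm : x = m + 1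
    · subst hm
      rw [ev', ef']; exact h3
    · rw [ev x hm, ef x hm]
      exact h.pair x hix (by omega)

theorem Str.single {X : ARep k n ε} {m : ℕ} (u : X.V (m + 1)) (ψ : X.V (m + 1) →ₗ[k] k)
    (h1 : ε m = true → ∀ w, ψ (X.fwd m w) = 0)
    (h2 : ε m = false → X.bwd m u = 0) (h3 : ψ u = 1) :
    Str X (m + 1) (m + 1) (Function.update (fun _ => 0) (m + 1) u)
      (Function.update (fun _ => 0) (m + 1) ψ) := by
  have ev : ∀ x, x ≠ m + 1 → Function.update (fun x => (0 : X.V x)) (m + 1) u x = 0 :=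
    fun x hx => Function.update_of_ne hx _ _
  have ef : ∀ x, x ≠ m + 1 → Function.update (fun x => (0 : X.V x →ₗ[k] k)) (m + 1) ψ x = 0 :=
    fun x hx => Function.update_of_ne hx _ _
  have ev' : Function.update (fun x => (0 : X.V x)) (m + 1) u (m + 1) = u :=
    Function.update_self _ _ _
  have ef' : Function.update (fun x => (0 : X.V x →ₗ[k] k)) (m + 1) ψ (m + 1) = ψ :=
    Function.update_self _ _ _
  constructor
  · intro x hx
    exact ev x (by omega)
  · intro x hx
    exact ef x (by omega)
  · intro l hl hil hlm
    omega
  · intro l hl hlm w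
    rw [ef l (by omega)]
    by_cases hm : l = m
    · subst hm
      rw [ef']; exact h1 hl w
    · rw [ef (l + 1) (by omega)]
      simp
  · intro l hl hlm
    rw [ev l (by omega)]
    by_cases hm : l = m
    · subst hm
      rw [ev']; exact h2 hl
    · rw [ev (l + 1) (by omega)]
      simp
  · intro l hl hil hlm w
    omega
  · intro x hix hxm
    have hm : x = m + 1 := by omega
    subst hm
    rw [ev', ef']; exact h3

theorem exists_str (X : ARep k n ε) (m : ℕ) : ∀ W Z : Submodule k (X.V m), W ≤ Z → ¬Z ≤ W →
    ∃ i v φ, 1 ≤ i ∧ i ≤ m ∧ Str X i m v φ ∧ v m ∈ Z ∧ ∀ w ∈ W, φ m w = 0 := by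
  induction m with
  | zero =>
    intro W Z _ h
    exfalso
    apply h
    intro z _
    rw [X.triv 0 (Or.inl rfl) z]
    exact W.zero_mem
  | succ m ih =>
    intro W Z hWZ hZW
    have finish_single : ∀ (u : X.V (m + 1)) (ψ : X.V (m + 1) →ₗ[k] k),
        (ε m = true → ∀ w, ψ (X.fwd m w) = 0) → (ε m = false → X.bwd m u = 0) → ψ u = 1 →
        u ∈ Z → (∀ w ∈ W, ψ w = 0) →
        ∃ i v φ, 1 ≤ i ∧ i ≤ m + 1 ∧ Str X i (m + 1) v φ ∧ v (m + 1) ∈ Z ∧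
          ∀ w ∈ W, φ (m + 1) w = 0 := by
      intro u ψ h1 h2 h3 hu hw
      refine ⟨m + 1, _, _, by omega, le_rfl, Str.single u ψ h1 h2 h3, ?_, ?_⟩
      · rw [Function.update_self]; exact hu
      · rw [Function.update_self]; exact hw
    have finish_ext : ∀ i v φ, 1 ≤ i → i ≤ m → Str X i m v φ →
        ∀ (u : X.V (m + 1)) (ψ : X.V (m + 1) →ₗ[k] k),
        (ε m = true → X.fwd m (v m) = u ∧ ∀ w, ψ (X.fwd m w) = φ m w) →
        (ε m = false → X.bwd m u = v m ∧ ∀ w, φ m (X.bwd m w) = ψ w) → ψ u = 1 →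
        u ∈ Z → (∀ w ∈ W, ψ w = 0) →
        ∃ i v φ, 1 ≤ i ∧ i ≤ m + 1 ∧ Str X i (m + 1) v φ ∧ v (m + 1) ∈ Z ∧
          ∀ w ∈ W, φ (m + 1) w = 0 := by
      intro i v φ hi him hS u ψ h1 h2 h3 hu hw
      refine ⟨i, _, _, hi, by omega, hS.extend him u ψ h1 h2 h3, ?_, ?_⟩
      · rw [Function.update_self]; exact hu
      · rw [Function.update_self]; exact hw
    cases hε : ε m with
    | true =>
      by_cases hc : ∀ u, X.fwd m u ∈ Z → X.fwd m u ∈ W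
      · obtain ⟨z, hz, hzW⟩ := Set.not_subset.1 hZW
        have hz' : z ∉ W ⊔ LinearMap.range (X.fwd m) := by
          intro hmem
          obtain ⟨w, hw, r, ⟨u, rfl⟩, hwr⟩ := Submodule.mem_sup.1 hmem
          apply hzW
          have : X.fwd m u ∈ Z := by
            have h1 : X.fwd m u = z - w := by rw [← hwr]; abel
            rw [h1]; exact Z.sub_mem hz (hWZ hw)
          rw [← hwr]
          exact W.add_mem hw (hc u this)
        obtain ⟨ψ, hψ1, hψ2⟩ := exists_functional _ z hz'
        refine finish_single z ψ (fun _ w => hψ2 _ ?_) (by simp [hε]) hψ1 hz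
          (fun w hw => hψ2 w (Submodule.mem_sup_left hw))
        exact Submodule.mem_sup_right ⟨w, rfl⟩
      · push Not at hc
        obtain ⟨u₀, hu₀Z, hu₀W⟩ := hc
        obtain ⟨i, v, φ, hi, him, hS, hvZ, hφ⟩ := ih (W.comap (X.fwd m)) (Z.comap (X.fwd m))
          (Submodule.comap_mono hWZ) (fun h => hu₀W (h (show u₀ ∈ Z.comap (X.fwd m) from hu₀Z)))
        obtain ⟨ψ, hψW, hψ⟩ := exists_factor (X.fwd m) W (φ m) (fun u hu => hφ u hu)
        refine finish_ext i v φ hi him hS (X.fwd m (v m)) ψ (fun _ => ⟨rfl, hψ⟩) (by simp [hε])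
          ?_ hvZ hψW
        rw [hψ]; exact hS.pair m him le_rfl
    | false =>
      by_cases hc : ∀ u ∈ Z, X.bwd m u = 0 → u ∈ W
      · have hne : ¬ Z.map (X.bwd m) ≤ W.map (X.bwd m) := by
          intro h
          apply hZW
          intro z hz
          obtain ⟨w, hw, hwz⟩ := h (Submodule.mem_map_of_mem hz)
          have h1 : z - w ∈ W := hc _ (Z.sub_mem hz (hWZ hw)) (by rw [map_sub, hwz, sub_self])
          have := W.add_mem h1 hw
          simpa using this
        obtain ⟨i, v, φ, hi, him, hS, hvZ, hφ⟩ := ih _ _ (Submodule.map_mono hWZ) hne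
        obtain ⟨z, hz, hzv⟩ := hvZ
        refine finish_ext i v φ hi him hS z ((φ m).comp (X.bwd m)) (by simp [hε])
          (fun _ => ⟨hzv, fun _ => rfl⟩) ?_ hz (fun w hw => hφ _ (Submodule.mem_map_of_mem hw))
        rw [LinearMap.comp_apply, hzv]
        exact hS.pair m him le_rfl
      · push Not at hc
        obtain ⟨u, huZ, hu0, huW⟩ := hc
        obtain ⟨ψ, hψ1, hψ2⟩ := exists_functional _ u huW
        exact finish_single u ψ (by simp [hε]) (fun _ => hu0) hψ1 huZ hψ2

theorem exists_interval_summand (X : ARep k n ε) (hX : ¬X.IsZero) :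
    ∃ e, ValidPair n e ∧ ∃ Y : ARep k n ε, X.Iso ((IR k n ε e).dsum Y) := by
  have hex : ∃ x, ∃ v : X.V x, v ≠ 0 := by
    unfold ARep.IsZero at hX
    push Not at hX
    exact hX
  have hbd : ∀ x, (∃ v : X.V x, v ≠ 0) → x ≤ n + 2 := by
    rintro x ⟨v, hv⟩
    by_contra h
    exact hv (X.triv x (Or.inr (by omega)) v)
  obtain ⟨x₀, hx₀⟩ := hex
  have hm := Nat.findGreatest_spec (P := fun x => ∃ v : X.V x, v ≠ 0) (hbd x₀ hx₀) hx₀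
  set m := Nat.findGreatest (fun x => ∃ v : X.V x, v ≠ 0) (n + 2) with hmdef
  have hmax : ∀ x, m < x → ∀ v : X.V x, v = 0 := by
    intro x hx v
    by_contra hv
    have h1 := hbd x ⟨v, hv⟩
    exact Nat.findGreatest_is_greatest hx h1 ⟨v, hv⟩
  have hmn : m ≤ n + 2 := hbd m hm
  obtain ⟨u, hu⟩ := hm
  obtain ⟨i, v, φ, hi, him, hS, -, -⟩ := exists_str X m ⊥ ⊤ bot_le
    (fun h => hu ((Submodule.mem_bot k).1 (h (Submodule.mem_top (x := u)))))
  obtain ⟨i, rfl⟩ : ∃ i', i = i' + 1 := ⟨i - 1, by omega⟩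
  have hval : ValidPair n (i, m) := ⟨by simpa using him, hmn⟩
  have hI : ∀ x, Ins n (i, m) x ↔ i < x ∧ x ≤ m := Ins_iff hval
  let f : (IR k n ε (i, m)).Hom X := homFrom (i, m) X v
    (by
      intro l hl hin
      rw [hI] at hin
      by_cases h : l < m
      · rw [if_pos ((hI _).2 (by omega))]
        exact hS.fv l hl (by omega) h
      · rw [if_neg (by rw [hI]; omega)]
        exact hmax _ (by omega) _)
    (by
      intro l hl hin
      rw [hI] at hin
      rw [hS.bv l hl (by omega)]
      split_ifs with h
      · rfl
      · rw [hI] at h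
        exact hS.v0 l (by omega))
  let g : X.Hom (IR k n ε (i, m)) := homTo (i, m) X φ
    (by
      intro x hx
      rw [hI] at hx
      exact hS.f0 x (by omega))
    (by
      intro l hl hin
      rw [hI] at hin
      exact hS.ff l hl (by omega))
    (by
      intro l hl hin u
      rw [hI] at hin
      by_cases h : l < m
      · exact hS.bf l hl (by omega) h u
      · rw [hmax _ (by omega) u]; simp)
  refine ⟨(i, m), hval, kerRep g, iso_dsum_ker f g ?_⟩
  intro x w
  apply cf_inj
  rw [cf_homTo, homFrom_app, map_smul]
  by_cases hx : Ins n (i, m) x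
  · have := (hI x).1 hx
    rw [hS.pair x (by omega) (by omega)]
    simp
  · rw [cf_zero hx]; simp

/-- Direct sum of interval representations. -/
abbrev SL (k : Type) [Field k] (n : ℕ) (ε : ℕ → Bool) (L : List (ℕ × ℕ)) : ARep k n ε :=
  dsumList k n ε (L.map (IR k n ε))

/-- Total dimension. -/
def tdim (X : ARep k n ε) : ℕ := ∑ x ∈ Finset.range (n + 3), Module.finrank k (X.V x)

theorem tdim_iso {X Y : ARep k n ε} (h : X.Iso Y) : tdim X = tdim Y := by
  obtain ⟨f, hf⟩ := h
  exact Finset.sum_congr rfl fun x _ =>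
    (LinearEquiv.ofBijective (f.app x) (hf x)).finrank_eq

theorem tdim_dsum (X Y : ARep k n ε) : tdim (X.dsum Y) = tdim X + tdim Y := by
  unfold tdim
  rw [← Finset.sum_add_distrib]
  exact Finset.sum_congr rfl fun x _ => Module.finrank_prod

theorem tdim_pos {X : ARep k n ε} (h : ¬X.IsZero) : 0 < tdim X := by
  unfold ARep.IsZero at h
  push Not at h
  obtain ⟨x, v, hv⟩ := h
  have hx : x ∈ Finset.range (n + 3) := by
    rw [Finset.mem_range]
    by_contra hh
    exact hv (X.triv x (Or.inr (by omega)) v)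
  have : 0 < Module.finrank k (X.V x) := Module.finrank_pos_iff_exists_ne_zero.2 ⟨v, hv⟩
  exact lt_of_lt_of_le this
    (Finset.single_le_sum (f := fun x => Module.finrank k (X.V x)) (fun _ _ => Nat.zero_le _) hx)

theorem exists_decomp (X : ARep k n ε) :
    ∃ L : List (ℕ × ℕ), (∀ e ∈ L, ValidPair n e) ∧ X.Iso (SL k n ε L) := by
  induction hd : tdim X using Nat.strong_induction_on generalizing X with
  | _ d ih =>
    by_cases hX : X.IsZero
    · refine ⟨[], by simp, ?_⟩
      exact (dsum_zero (M := X) zeroRep_isZero).symm.trans (zero_dsum hX)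
    · obtain ⟨e, he, Y, hY⟩ := exists_interval_summand X hX
      have h1 := tdim_iso hY
      rw [tdim_dsum] at h1
      have h2 := tdim_pos (IR_not_isZero (k := k) (ε := ε) he)
      obtain ⟨L, hL, hYL⟩ := ih (tdim Y) (by omega) Y rfl
      refine ⟨e :: L, ?_, hY.trans ((ARep.Iso.refl _).dsum hYL)⟩
      intro f hf
      rcases List.mem_cons.1 hf with rfl | hf
      · exact he
      · exact hL f hf


/-! ### Endomorphisms of interval representations, Krull-Schmidt -/

theorem hom_val_step {e f : ℕ × ℕ} (h : (IR k n ε e).Hom (IR k n ε f)) (x : ℕ)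
    (h1 : Ins n e x) (h2 : Ins n e (x + 1)) (h3 : Ins n f x) (h4 : Ins n f (x + 1)) :
    cf f (x + 1) (h.app (x + 1) (gv e (x + 1))) = cf f x (h.app x (gv e x)) := by
  cases hε : ε x with
  | true =>
    rw [← fwd_gv e x hε h1, h.comm_fwd, cf_fwd, if_pos ⟨hε, h4⟩]
  | false =>
    rw [← bwd_gv e x hε h2, h.comm_bwd, cf_bwd, if_pos ⟨hε, h3⟩]

theorem endo_const {e : ℕ × ℕ} (he : ValidPair n e) (h : (IR k n ε e).Hom (IR k n ε e)) (x : ℕ)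
    (hx : Ins n e x) : cf e x (h.app x (gv e x)) = cf e e.2 (h.app e.2 (gv e e.2)) := by
  have key : ∀ d y, y + d = e.2 → Ins n e y →
      cf e y (h.app y (gv e y)) = cf e e.2 (h.app e.2 (gv e e.2)) := by
    intro d
    induction d with
    | zero => intro y hy _; have : y = e.2 := by omega
              subst this; rfl
    | succ d ih =>
      intro y hy hyI
      have hI := Ins_iff he
      have hy' : Ins n e (y + 1) := by
        rw [hI] at hyI ⊢
        omega
      rw [← ih (y + 1) (by omega) hy', hom_val_step h y hyI hy' hyI hy']
  have := (Ins_iff he x).1 hx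
  exact key (e.2 - x) x (by omega) hx

theorem endo_smul {e : ℕ × ℕ} (he : ValidPair n e) (h : (IR k n ε e).Hom (IR k n ε e)) (x : ℕ)
    (u : (IR k n ε e).V x) : h.app x u = cf e e.2 (h.app e.2 (gv e e.2)) • u := by
  apply cf_inj
  by_cases hx : Ins n e x
  · rw [map_smul, ← endo_const he h x hx]
    conv_lhs => rw [eq_smul_gv u]
    rw [map_smul, map_smul, smul_eq_mul, smul_eq_mul, mul_comm]
  · rw [cf_zero hx, cf_zero hx]

theorem comp_zero {e f : ℕ × ℕ} (he : ValidPair n e) (hf : ValidPair n f) (hef : e ≠ f)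
    (p : (IR k n ε e).Hom (IR k n ε f)) (q : (IR k n ε f).Hom (IR k n ε e)) (x : ℕ)
    (u : (IR k n ε e).V x) : q.app x (p.app x u) = 0 := by
  have hIe := Ins_iff he
  have hIf := Ins_iff hf
  have hv1 := he.1
  have hv2 := hf.1
  suffices hs : ∃ y, Ins n e y ∧ cf e y (q.app y (p.app y (gv e y))) = 0 by
    obtain ⟨y, hy, h0⟩ := hs
    have h1 := endo_smul he (q.comp p) x u
    have h2 := endo_const he (q.comp p) y hy
    have h3 : cf e y ((q.comp p).app y (gv e y)) = 0 := h0
    rw [← h2, h3, zero_smul] at h1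
    exact h1
  have zero_of_p : ∀ y, cf f y (p.app y (gv e y)) = 0 →
      cf e y (q.app y (p.app y (gv e y))) = 0 := by
    intro y h
    have : p.app y (gv e y) = 0 := cf_inj (by rw [h, map_zero])
    rw [this, map_zero, map_zero]
  have zero_of_q : ∀ y, cf e y (q.app y (gv f y)) = 0 →
      cf e y (q.app y (p.app y (gv e y))) = 0 := by
    intro y h
    rw [eq_smul_gv (p.app y (gv e y)), map_smul, map_smul, h, smul_zero]
  by_cases hsub : ∃ y, Ins n e y ∧ ¬Ins n f y
  · obtain ⟨y, hy, hyf⟩ := hsub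
    exact ⟨y, hy, zero_of_p y (cf_zero hyf _)⟩
  · push Not at hsub
    have hA := (hIf _).1 (hsub (e.1 + 1) ((hIe _).2 ⟨by omega, by omega⟩))
    have hB := (hIf _).1 (hsub e.2 ((hIe _).2 ⟨by omega, by omega⟩))
    by_cases hleft : f.1 < e.1
    · have k1 : Ins n e (e.1 + 1) := (hIe _).2 ⟨by omega, by omega⟩
      have k2 : ¬Ins n e e.1 := by rw [hIe]; omega
      have k3 : Ins n f (e.1 + 1) := (hIf _).2 ⟨by omega, by omega⟩
      have k4 : Ins n f e.1 := (hIf _).2 ⟨by omega, by omega⟩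
      refine ⟨e.1 + 1, k1, ?_⟩
      cases hε : ε e.1 with
      | true =>
        apply zero_of_q
        rw [← fwd_gv f e.1 hε k4, q.comm_fwd, cf_fwd, cf_zero k2]
        simp
      | false =>
        apply zero_of_p
        have h1 := p.comm_bwd e.1 (gv e (e.1 + 1))
        have h2 : (IR k n ε e).bwd e.1 (gv e (e.1 + 1)) = 0 := by
          rw [bwd_gv e e.1 hε k1, gv_zero k2]
        have h3 := congrArg (cf f e.1) h1
        rw [h2, map_zero, map_zero, cf_bwd, if_pos ⟨hε, k4⟩] at h3
        exact h3.symm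
    · have hright : e.2 < f.2 := by
        rcases lt_or_eq_of_le hB.2 with h | h
        · exact h
        · exact absurd (Prod.ext (by omega) h) hef
      have k1 : Ins n e e.2 := (hIe _).2 ⟨by omega, by omega⟩
      have k2 : ¬Ins n e (e.2 + 1) := by rw [hIe]; omega
      have k3 : Ins n f e.2 := (hIf _).2 ⟨by omega, by omega⟩
      have k4 : Ins n f (e.2 + 1) := (hIf _).2 ⟨by omega, by omega⟩
      refine ⟨e.2, k1, ?_⟩
      cases hε : ε e.2 with
      | false =>
        apply zero_of_q
        rw [← bwd_gv f e.2 hε k4, q.comm_bwd, cf_bwd, cf_zero k2]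
        simp
      | true =>
        apply zero_of_p
        have h1 := p.comm_fwd e.2 (gv e e.2)
        have h2 : (IR k n ε e).fwd e.2 (gv e e.2) = 0 := by
          rw [fwd_gv e e.2 hε k1, gv_zero k2]
        have h3 := congrArg (cf f (e.2 + 1)) h1
        rw [h2, map_zero, map_zero, cf_fwd, if_pos ⟨hε, k4⟩] at h3
        exact h3.symm

theorem IR_indec {e : ℕ × ℕ} (he : ValidPair n e) : (IR k n ε e).Indec := by
  refine ⟨IR_not_isZero he, fun A B hAB => ?_⟩
  obtain ⟨φ, hφ⟩ := hAB
  obtain ⟨ψ, h1, h2⟩ := φ.exists_inv hφ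
  let h : (IR k n ε e).Hom (IR k n ε e) := ψ.comp ((in1 A B).comp ((pr1 A B).comp φ))
  have hh : ∀ x u, h.app x u = ψ.app x ((in1 A B).app x ((pr1 A B).app x (φ.app x u))) :=
    fun x u => rfl
  have r1 : ∀ x (v : A.V x), (pr1 A B).app x ((in1 A B).app x v) = v := fun x v => rfl
  have r2 : ∀ x (v : B.V x), (pr1 A B).app x ((in2 A B).app x v) = 0 := fun x v => rfl
  have r3 : ∀ x (v : B.V x), (pr2 A B).app x ((in2 A B).app x v) = v := fun x v => rfl
  have hidem : ∀ x u, h.app x (h.app x u) = h.app x u := by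
    intro x u
    rw [hh, hh, h2, r1]
  have hsm := endo_smul he h
  obtain ⟨c, hc⟩ : ∃ c, c = cf e e.2 (h.app e.2 (gv e e.2)) := ⟨_, rfl⟩
  rw [← hc] at hsm
  have hcc : c * c = c := by
    have h3 := hidem e.2 (gv e e.2)
    rw [hsm, hsm, smul_smul] at h3
    have h4 := congrArg (cf e e.2) h3
    rw [map_smul, map_smul, cf_gv, if_pos ((Ins_iff he _).2 ⟨he.1, le_rfl⟩)] at h4
    simpa using h4
  have hc01 : c = 0 ∨ c = 1 := by
    have : c * (c - 1) = 0 := by rw [mul_sub, hcc]; ring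
    rcases mul_eq_zero.1 this with h | h
    · exact Or.inl h
    · exact Or.inr (sub_eq_zero.1 h)
  rcases hc01 with hc0 | hc1
  · left
    intro x v
    have h3 : h.app x (ψ.app x ((in1 A B).app x v)) = ψ.app x ((in1 A B).app x v) := by
      rw [hh, h2, r1]
    rw [hsm, hc0, zero_smul] at h3
    have h4 := congrArg (φ.app x) h3
    rw [h2, map_zero] at h4
    rw [← r1 x v, ← h4, map_zero]
  · right
    intro x v
    have h3 : h.app x (ψ.app x ((in2 A B).app x v)) = 0 := by
      rw [hh, h2, r2, map_zero, map_zero]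
    rw [hsm, hc1, one_smul] at h3
    have h4 := congrArg (φ.app x) h3
    rw [h2, map_zero] at h4
    rw [← r3 x v, h4, map_zero]

theorem indec_iso_IR {A : ARep k n ε} (hA : A.Indec) :
    ∃ e, ValidPair n e ∧ A.Iso (IR k n ε e) := by
  obtain ⟨e, he, Y, hY⟩ := exists_interval_summand A hA.1
  refine ⟨e, he, ?_⟩
  rcases hA.2 _ _ hY with h | h
  · exact absurd h (IR_not_isZero he)
  · exact hY.trans (dsum_zero h)

/-- The zero morphism. -/
def zeroHom (M N : ARep k n ε) : M.Hom N where
  app _ := 0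
  comm_fwd i v := by simp
  comm_bwd i v := by simp

/-- Image at `e.2` of the morphisms from the interval `e`. -/
def Usub (e : ℕ × ℕ) (X : ARep k n ε) : Submodule k (X.V e.2) where
  carrier := {u | ∃ f : (IR k n ε e).Hom X, f.app e.2 (gv e e.2) = u}
  add_mem' := by
    rintro _ _ ⟨f, rfl⟩ ⟨g, rfl⟩
    exact ⟨f.add g, rfl⟩
  zero_mem' := ⟨zeroHom _ _, rfl⟩
  smul_mem' := by
    rintro c _ ⟨f, rfl⟩
    exact ⟨f.smul c, rfl⟩

/-- Common kernel at `e.2` of the morphisms to the interval `e`. -/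
def Nsub (e : ℕ × ℕ) (X : ARep k n ε) : Submodule k (X.V e.2) where
  carrier := {u | ∀ g : X.Hom (IR k n ε e), g.app e.2 u = 0}
  add_mem' := by
    intro a b ha hb g
    rw [map_add, ha g, hb g, add_zero]
  zero_mem' := fun g => map_zero _
  smul_mem' := by
    intro c a ha g
    rw [map_smul, ha g, smul_zero]

/-- Multiplicity of the interval `e` in `X`. -/
def mu (e : ℕ × ℕ) (X : ARep k n ε) : ℕ :=
  Module.finrank k (Usub e X) - Module.finrank k (Usub e X ⊓ Nsub e X : Submodule k _)

theorem mu_iso {X Y : ARep k n ε} (h : X.Iso Y) (e : ℕ × ℕ) : mu e X = mu e Y := by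
  obtain ⟨φ, hφ⟩ := h
  obtain ⟨ψ, h1, h2⟩ := φ.exists_inv hφ
  let E : X.V e.2 ≃ₗ[k] Y.V e.2 := LinearEquiv.ofBijective (φ.app e.2) (hφ e.2)
  have hE : ∀ u, E u = φ.app e.2 u := fun u => rfl
  have hU : (Usub e X).map (E : X.V e.2 →ₗ[k] Y.V e.2) = Usub e Y := by
    apply le_antisymm
    · rintro _ ⟨_, ⟨f, rfl⟩, rfl⟩
      exact ⟨φ.comp f, rfl⟩
    · rintro _ ⟨f, rfl⟩
      exact ⟨ψ.app e.2 (f.app e.2 (gv e e.2)), ⟨ψ.comp f, rfl⟩, h2 _ _⟩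
  have hN : (Usub e X ⊓ Nsub e X).map (E : X.V e.2 →ₗ[k] Y.V e.2) = Usub e Y ⊓ Nsub e Y := by
    apply le_antisymm
    · rintro _ ⟨u, ⟨hu1, hu2⟩, rfl⟩
      exact ⟨hU ▸ Submodule.mem_map_of_mem hu1, fun g => hu2 (g.comp φ)⟩
    · rintro v ⟨hv1, hv2⟩
      rw [← hU] at hv1
      obtain ⟨u, hu, rfl⟩ := hv1
      refine ⟨u, ⟨hu, fun g => ?_⟩, rfl⟩
      have := hv2 (g.comp ψ)
      change g.app e.2 (ψ.app e.2 (φ.app e.2 u)) = 0 at this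
      rwa [h1] at this
  unfold mu
  rw [← hN, ← hU, LinearEquiv.finrank_map_eq, LinearEquiv.finrank_map_eq]

theorem finrank_subprod {V V' : Type} [AddCommGroup V] [Module k V] [FiniteDimensional k V]
    [AddCommGroup V'] [Module k V'] [FiniteDimensional k V'] (A : Submodule k V)
    (B : Submodule k V') :
    Module.finrank k (A.prod B) = Module.finrank k A + Module.finrank k B := by
  rw [← Module.finrank_prod]
  let E : ↥(A.prod B) ≃ₗ[k] (↥A × ↥B) :=
    { toFun := fun u => (⟨u.1.1, u.2.1⟩, ⟨u.1.2, u.2.2⟩)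
      map_add' := fun _ _ => rfl
      map_smul' := fun _ _ => rfl
      invFun := fun w => ⟨(w.1.1, w.2.1), w.1.2, w.2.2⟩
      left_inv := fun _ => rfl
      right_inv := fun _ => rfl }
  exact E.finrank_eq

theorem Usub_dsum (e : ℕ × ℕ) (X Y : ARep k n ε) :
    Usub e (X.dsum Y) = (Usub e X).prod (Usub e Y) := by
  apply le_antisymm
  · rintro _ ⟨f, rfl⟩
    exact ⟨⟨(pr1 X Y).comp f, rfl⟩, ⟨(pr2 X Y).comp f, rfl⟩⟩
  · rintro ⟨_, _⟩ ⟨⟨f, rfl⟩, ⟨g, rfl⟩⟩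
    exact ⟨pairH f g, rfl⟩

theorem Nsub_dsum (e : ℕ × ℕ) (X Y : ARep k n ε) :
    Nsub e (X.dsum Y) = (Nsub e X).prod (Nsub e Y) := by
  apply le_antisymm
  · rintro ⟨u, v⟩ h
    exact ⟨fun g => h (g.comp (pr1 X Y)), fun g => h (g.comp (pr2 X Y))⟩
  · rintro ⟨u, v⟩ ⟨h1, h2⟩ g
    have e1 : g.app e.2 (u, (0 : Y.V e.2)) = 0 := h1 (g.comp (in1 X Y))
    have e2 : g.app e.2 ((0 : X.V e.2), v) = 0 := h2 (g.comp (in2 X Y))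
    have e3 : ((u, v) : (X.dsum Y).V e.2) =
        (((u, 0) : X.V e.2 × Y.V e.2) + ((0, v) : X.V e.2 × Y.V e.2) :
          X.V e.2 × Y.V e.2) := by simp
    rw [e3]
    refine (map_add (g.app e.2) _ _).trans ?_
    rw [e1, e2, add_zero]

theorem mu_dsum (e : ℕ × ℕ) (X Y : ARep k n ε) : mu e (X.dsum Y) = mu e X + mu e Y := by
  have h1 : Module.finrank k (Usub e (X.dsum Y)) =
      Module.finrank k (Usub e X) + Module.finrank k (Usub e Y) := by
    rw [Usub_dsum]; exact finrank_subprod _ _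
  have h2 : Module.finrank k (Usub e (X.dsum Y) ⊓ Nsub e (X.dsum Y) : Submodule k _) =
      Module.finrank k (Usub e X ⊓ Nsub e X : Submodule k _) +
        Module.finrank k (Usub e Y ⊓ Nsub e Y : Submodule k _) := by
    rw [Usub_dsum, Nsub_dsum]
    refine Eq.trans ?_ (finrank_subprod _ _)
    rw [← Submodule.prod_inf_prod]
    rfl
  have h3 := Submodule.finrank_mono (inf_le_left : Usub e X ⊓ Nsub e X ≤ Usub e X)
  have h4 := Submodule.finrank_mono (inf_le_left : Usub e Y ⊓ Nsub e Y ≤ Usub e Y)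
  unfold mu
  rw [h1, h2]
  omega

theorem mu_zero {X : ARep k n ε} (hX : X.IsZero) (e : ℕ × ℕ) : mu e X = 0 := by
  have : mu e X = mu e (X.dsum X) := mu_iso (zero_dsum hX).symm e
  rw [mu_dsum] at this
  omega

theorem mu_self {e : ℕ × ℕ} (he : ValidPair n e) : mu e (IR k n ε e) = 1 := by
  have hin : Ins n e e.2 := (Ins_iff he _).2 ⟨he.1, le_rfl⟩
  have hU : Usub e (IR k n ε e) = ⊤ := by
    rw [eq_top_iff]
    intro u _
    rw [eq_smul_gv u]
    exact Submodule.smul_mem _ _ ⟨ARep.Hom.id _, rfl⟩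
  have hN : Nsub e (IR k n ε e) = ⊥ := by
    rw [eq_bot_iff]
    intro u hu
    exact (Submodule.mem_bot k).2 (hu (ARep.Hom.id _))
  have h1 : Module.finrank k ((IR k n ε e).V e.2) = 1 := by
    have hb : Function.Bijective (cf e e.2 : (IR k n ε e).V e.2 →ₗ[k] k) := by
      refine ⟨fun u v h => cf_inj h, fun c => ⟨c • gv e e.2, ?_⟩⟩
      rw [map_smul, cf_gv, if_pos hin]; simp
    rw [(LinearEquiv.ofBijective _ hb).finrank_eq, Module.finrank_self]
  unfold mu
  rw [hU, hN, inf_bot_eq, finrank_top, finrank_bot, h1]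

theorem mu_ne {e f : ℕ × ℕ} (he : ValidPair n e) (hf : ValidPair n f) (hef : e ≠ f) :
    mu e (IR k n ε f) = 0 := by
  have : Usub e (IR k n ε f) ≤ Nsub e (IR k n ε f) := by
    rintro _ ⟨p, rfl⟩ q
    exact comp_zero he hf hef p q _ _
  unfold mu
  rw [inf_eq_left.2 this, Nat.sub_self]

theorem mu_SL {e : ℕ × ℕ} (he : ValidPair n e) (L : List (ℕ × ℕ))
    (hL : ∀ f ∈ L, ValidPair n f) : mu e (SL k n ε L) = L.count e := by
  induction L with
  | nil => exact (mu_zero zeroRep_isZero e).trans (by simp)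
  | cons f L ih =>
    have h1 : mu e (SL k n ε (f :: L)) = mu e (IR k n ε f) + mu e (SL k n ε L) := mu_dsum e _ _
    rw [h1, ih (fun g hg => hL g (List.mem_cons_of_mem _ hg)), List.count_cons]
    by_cases hef : f = e
    · subst hef
      rw [mu_self he]; simp [add_comm]
    · rw [mu_ne he (hL f List.mem_cons_self) (Ne.symm hef)]; simp [hef]

theorem SL_perm {L L' : List (ℕ × ℕ)} (h : L.Perm L') : (SL k n ε L).Iso (SL k n ε L') := by
  induction h with
  | nil => exact ARep.Iso.refl _
  | cons e _ ih => exact (ARep.Iso.refl (IR k n ε e)).dsum ih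
  | swap e f L =>
    exact ((dsum_assoc (IR k n ε f) (IR k n ε e) (SL k n ε L)).symm.trans
      ((dsum_comm (IR k n ε f) (IR k n ε e)).dsum (ARep.Iso.refl _))).trans (dsum_assoc _ _ _)
  | trans _ _ ih1 ih2 => exact ih1.trans ih2

theorem SL_append (L L' : List (ℕ × ℕ)) :
    (SL k n ε (L ++ L')).Iso ((SL k n ε L).dsum (SL k n ε L')) := by
  induction L with
  | nil => exact (zero_dsum zeroRep_isZero).symm
  | cons e L ih =>
    exact ((ARep.Iso.refl (IR k n ε e)).dsum ih).trans (dsum_assoc _ _ _).symm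

theorem perm_of_SL_iso {L L' : List (ℕ × ℕ)} (hL : ∀ f ∈ L, ValidPair n f)
    (hL' : ∀ f ∈ L', ValidPair n f) (h : (SL k n ε L).Iso (SL k n ε L')) : L.Perm L' := by
  rw [List.perm_iff_count]
  intro e
  by_cases he : ValidPair n e
  · rw [← mu_SL (k := k) (ε := ε) he L hL, ← mu_SL (k := k) (ε := ε) he L' hL', mu_iso h]
  · rw [List.count_eq_zero_of_not_mem fun h => he (hL e h),
      List.count_eq_zero_of_not_mem fun h => he (hL' e h)]


/-! ### Transport of extensions along isomorphisms -/

/-- Transport of a short exact sequence along isomorphisms. -/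
def SES.tr {A B A' B' : ARep k n ε} (σ : SES B A) (β : B'.Hom B) (α : A.Hom A')
    (hβ : ∀ x, Function.Bijective (β.app x)) (hα : ∀ x, Function.Bijective (α.app x)) :
    SES B' A' where
  E := σ.E
  ι := σ.ι.comp β
  π := α.comp σ.π
  inj x := (σ.inj x).comp (hβ x).1
  surj x := (hα x).2.comp (σ.surj x)
  exct x v := by
    change α.app x (σ.π.app x v) = 0 ↔ ∃ u, σ.ι.app x (β.app x u) = v
    constructor
    · intro h
      have h1 : σ.π.app x v = 0 := (hα x).1 (by rw [h, map_zero])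
      obtain ⟨u, hu⟩ := (σ.exct x v).1 h1
      obtain ⟨u', rfl⟩ := (hβ x).2 u
      exact ⟨u', hu⟩
    · rintro ⟨u, hu⟩
      rw [(σ.exct x v).2 ⟨_, hu⟩, map_zero]

theorem splits_of_tr {A B A' B' : ARep k n ε} (σ : SES B A) (β : B'.Hom B) (α : A.Hom A')
    (hβ : ∀ x, Function.Bijective (β.app x)) (hα : ∀ x, Function.Bijective (α.app x))
    (h : (σ.tr β α hβ hα).Splits) : σ.Splits := by
  obtain ⟨r, hr⟩ := h
  refine ⟨β.comp r, fun x v => ?_⟩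
  obtain ⟨u, rfl⟩ := (hβ x).2 v
  exact congrArg (β.app x) (hr x u)

theorem ExtZero.of_iso {A B A' B' : ARep k n ε} (h : ExtZero A B) (hA : A.Iso A')
    (hB : B.Iso B') : ExtZero A' B' := by
  obtain ⟨β, hβ⟩ := hB
  obtain ⟨α, hα⟩ := hA.symm
  intro σ
  exact splits_of_tr σ β α hβ hα (h _)

theorem ExtOneDimIndecMid.of_iso {A B A' B' : ARep k n ε} (h : ExtOneDimIndecMid A B)
    (hA : A.Iso A') (hB : B.Iso B') : ExtOneDimIndecMid A' B' := by
  obtain ⟨β, hβ⟩ := hB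
  obtain ⟨α, hα⟩ := hA
  obtain ⟨β', hb1, hb2⟩ := β.exists_inv hβ
  obtain ⟨α', ha1, ha2⟩ := α.exists_inv hα
  have hβ' : ∀ x, Function.Bijective (β'.app x) := fun x =>
    Function.bijective_iff_has_inverse.2 ⟨β.app x, hb2 x, hb1 x⟩
  have hα' : ∀ x, Function.Bijective (α'.app x) := fun x =>
    Function.bijective_iff_has_inverse.2 ⟨α.app x, ha2 x, ha1 x⟩
  obtain ⟨σ, hσ, hE, hall⟩ := h
  refine ⟨σ.tr β' α hβ' hα, fun hs => hσ (splits_of_tr σ _ _ _ _ hs), hE, fun τ hτ => ?_⟩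
  obtain ⟨c, hc, φ, h1, h2, h3⟩ := hall (τ.tr β α' hβ hα')
    (fun hs => hτ (splits_of_tr τ _ _ _ _ hs))
  refine ⟨c, hc, φ, h1, fun x v => ?_, fun x v => ?_⟩
  · refine (h2 x (β'.app x v)).trans ?_
    change τ.ι.app x (β.app x (β'.app x v)) = _
    rw [hb2]
  · have h4 : α'.app x (τ.π.app x (φ.app x v)) = c • σ.π.app x v := h3 x v
    change τ.π.app x (φ.app x v) = c • α.app x (σ.π.app x v)
    rw [← map_smul, ← h4, ha2]

theorem five_bij {A B : ARep k n ε} (σ τ : SES B A) (φ : σ.E.Hom τ.E) (c : k) (hc : c ≠ 0)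
    (h1 : ∀ x (v : B.V x), φ.app x (σ.ι.app x v) = τ.ι.app x v)
    (h2 : ∀ x (v : σ.E.V x), τ.π.app x (φ.app x v) = c • σ.π.app x v) (x : ℕ) :
    Function.Bijective (φ.app x) := by
  constructor
  · refine (injective_iff_map_eq_zero (φ.app x)).2 fun v hv => ?_
    have h3 := h2 x v
    rw [hv, map_zero] at h3
    have h4 : σ.π.app x v = 0 := by
      rcases smul_eq_zero.1 h3.symm with h | h
      · exact absurd h hc
      · exact h
    obtain ⟨u, rfl⟩ := (σ.exct x v).1 h4
    rw [h1] at hv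
    have : u = 0 := τ.inj x (by rw [hv, map_zero])
    rw [this, map_zero]
  · intro w
    obtain ⟨v, hv⟩ := σ.surj x (c⁻¹ • τ.π.app x w)
    have h3 : τ.π.app x (w - φ.app x v) = 0 := by
      rw [map_sub, h2, hv, smul_smul, mul_inv_cancel₀ hc, one_smul, sub_self]
    obtain ⟨u, hu⟩ := (τ.exct x _).1 h3
    refine ⟨v + σ.ι.app x u, ?_⟩
    rw [map_add, h1, hu]
    abel

theorem splits_of_section {A B : ARep k n ε} (σ : SES B A) (s : A.Hom σ.E)
    (hs : ∀ x u, σ.π.app x (s.app x u) = u) : σ.Splits := by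
  let τ : SES B A :=
    { E := B.dsum A
      ι := in1 B A
      π := pr2 B A
      inj := fun x u v h => congrArg Prod.fst h
      surj := fun x u => ⟨(0, u), rfl⟩
      exct := fun x v => ⟨fun h => ⟨v.1, Prod.ext rfl (Eq.symm h)⟩, by
        rintro ⟨u, rfl⟩
        rfl⟩ }
  let φ : τ.E.Hom σ.E := copairH σ.ι s
  have h1 : ∀ x (v : B.V x), φ.app x (τ.ι.app x v) = σ.ι.app x v := by
    intro x v
    change σ.ι.app x v + s.app x 0 = _
    rw [map_zero, add_zero]
  have h2 : ∀ x (v : τ.E.V x), σ.π.app x (φ.app x v) = (1 : k) • τ.π.app x v := by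
    intro x v
    change σ.π.app x (σ.ι.app x v.1 + s.app x v.2) = (1 : k) • v.2
    rw [map_add, hs, (σ.exct x _).2 ⟨_, rfl⟩, zero_add, one_smul]
  obtain ⟨ψ, h3, h4⟩ := φ.exists_inv (five_bij τ σ φ 1 one_ne_zero h1 h2)
  refine ⟨(pr1 B A).comp ψ, fun x v => ?_⟩
  change (pr1 B A).app x (ψ.app x (σ.ι.app x v)) = v
  rw [← h1, h3]
  rfl

/-! ### Extensions of interval representations -/

theorem gv_fwd (e : ℕ × ℕ) (i : ℕ) (h : ε i = true) :
    (IR k n ε e).fwd i (gv e i) = if Ins n e i then gv e (i + 1) else 0 := by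
  split_ifs with hi
  · exact fwd_gv e i h hi
  · rw [gv_zero hi, map_zero]

theorem gv_bwd (e : ℕ × ℕ) (i : ℕ) (h : ε i = false) :
    (IR k n ε e).bwd i (gv e (i + 1)) = if Ins n e (i + 1) then gv e i else 0 := by
  split_ifs with hi
  · exact bwd_gv e i h hi
  · rw [gv_zero hi, map_zero]

/-- Presentation data of an extension of intervals. -/
structure Pres {e f : ℕ × ℕ} (σ : SES (IR k n ε e) (IR k n ε f)) (w : ∀ x, σ.E.V x)
    (δ : ℕ → k) : Prop where
  lift : ∀ x, σ.π.app x (w x) = gv f x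
  zero : ∀ x, ¬Ins n f x → w x = 0
  fwd : ∀ i, ε i = true → Ins n f i →
    σ.E.fwd i (w i) = w (i + 1) + δ i • σ.ι.app (i + 1) (gv e (i + 1))
  bwd : ∀ i, ε i = false → Ins n f (i + 1) →
    σ.E.bwd i (w (i + 1)) = w i + δ i • σ.ι.app i (gv e i)

theorem exists_pres {e f : ℕ × ℕ} (σ : SES (IR k n ε e) (IR k n ε f)) :
    ∃ w δ, Pres σ w δ := by
  choose w0 hw0 using fun x => σ.surj x (gv f x)
  let w : ∀ x, σ.E.V x := fun x => if Ins n f x then w0 x else 0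
  have hw : ∀ x, σ.π.app x (w x) = gv f x := by
    intro x
    by_cases h : Ins n f x
    · simp only [w, if_pos h, hw0]
    · simp only [w, if_neg h, map_zero, gv_zero h]
  have hz : ∀ x, ¬Ins n f x → w x = 0 := fun x h => if_neg h
  have key : ∀ i, ∃ d : k, (ε i = true → Ins n f i →
      σ.E.fwd i (w i) = w (i + 1) + d • σ.ι.app (i + 1) (gv e (i + 1))) ∧
      (ε i = false → Ins n f (i + 1) →
        σ.E.bwd i (w (i + 1)) = w i + d • σ.ι.app i (gv e i)) := by
    intro i
    cases hε : ε i with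
    | true =>
      by_cases hi : Ins n f i
      · have h1 : σ.π.app (i + 1) (σ.E.fwd i (w i) - w (i + 1)) = 0 := by
          rw [map_sub, σ.π.comm_fwd, hw, hw, fwd_gv f i hε hi, sub_self]
        obtain ⟨u, hu⟩ := (σ.exct _ _).1 h1
        refine ⟨cf e (i + 1) u, fun _ _ => ?_, fun h => by simp at h⟩
        rw [← map_smul, ← eq_smul_gv, hu]
        abel
      · exact ⟨0, fun _ h => absurd h hi, fun h => by simp at h⟩
    | false =>
      by_cases hi : Ins n f (i + 1)
      · have h1 : σ.π.app i (σ.E.bwd i (w (i + 1)) - w i) = 0 := by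
          rw [map_sub, σ.π.comm_bwd, hw, hw, bwd_gv f i hε hi, sub_self]
        obtain ⟨u, hu⟩ := (σ.exct _ _).1 h1
        refine ⟨cf e i u, fun h => by simp at h, fun _ _ => ?_⟩
        rw [← map_smul, ← eq_smul_gv, hu]
        abel
      · exact ⟨0, fun h => by simp at h, fun _ h => absurd h hi⟩
  choose δ hδ using key
  exact ⟨w, δ, hw, hz, fun i => (hδ i).1, fun i => (hδ i).2⟩

theorem splits_of_beta {e f : ℕ × ℕ} {σ : SES (IR k n ε e) (IR k n ε f)} {w : ∀ x, σ.E.V x}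
    {δ : ℕ → k} (P : Pres σ w δ) (β : ℕ → k) (he : ∀ x, ¬Ins n e x → β x = 0)
    (hf : ∀ x, ¬Ins n f x → β x = 0)
    (h1 : ∀ i, ε i = true → Ins n f i → Ins n e (i + 1) → δ i + β i = β (i + 1))
    (h2 : ∀ i, ε i = false → Ins n f (i + 1) → Ins n e i → δ i + β (i + 1) = β i) :
    σ.Splits := by
  have hb : ∀ x, β x • σ.ι.app x (gv e x) = if Ins n f x then β x • σ.ι.app x (gv e x) else 0 := by
    intro x
    split_ifs with h
    · rfl
    · rw [hf x h, zero_smul]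
  let s : (IR k n ε f).Hom σ.E := homFrom f σ.E (fun x => w x + β x • σ.ι.app x (gv e x))
    (by
      intro i hε hi
      have e1 : (if Ins n f (i + 1) then w (i + 1) + β (i + 1) • σ.ι.app (i + 1) (gv e (i + 1))
          else 0) = w (i + 1) + β (i + 1) • σ.ι.app (i + 1) (gv e (i + 1)) := by
        split_ifs with h
        · rfl
        · rw [hf _ h, P.zero _ h, zero_smul, add_zero]
      have e2 : β i • (if Ins n e i then σ.ι.app (i + 1) (gv e (i + 1)) else 0) =
          β i • σ.ι.app (i + 1) (gv e (i + 1)) := by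
        split_ifs with h
        · rfl
        · rw [he _ h, zero_smul, zero_smul]
      rw [e1, map_add, map_smul, ← σ.ι.comm_fwd, gv_fwd e i hε, apply_ite (σ.ι.app (i + 1)),
        map_zero, e2, P.fwd i hε hi, add_assoc, ← add_smul]
      by_cases h : Ins n e (i + 1)
      · rw [h1 i hε hi h]
      · rw [gv_zero h, map_zero, smul_zero, smul_zero])
    (by
      intro i hε hi
      have e1 : (if Ins n f i then w i + β i • σ.ι.app i (gv e i)
          else 0) = w i + β i • σ.ι.app i (gv e i) := by
        split_ifs with h
        · rfl
        · rw [hf _ h, P.zero _ h, zero_smul, add_zero]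
      have e2 : β (i + 1) • (if Ins n e (i + 1) then σ.ι.app i (gv e i) else 0) =
          β (i + 1) • σ.ι.app i (gv e i) := by
        split_ifs with h
        · rfl
        · rw [he _ h, zero_smul, zero_smul]
      rw [e1, map_add, map_smul, ← σ.ι.comm_bwd, gv_bwd e i hε, apply_ite (σ.ι.app i),
        map_zero, e2, P.bwd i hε hi, add_assoc, ← add_smul]
      by_cases h : Ins n e i
      · rw [h2 i hε hi h]
      · rw [gv_zero h, map_zero, smul_zero, smul_zero])
  refine splits_of_section σ s fun x u => ?_
  change σ.π.app x (cf f x u • (w x + β x • σ.ι.app x (gv e x))) = u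
  rw [map_smul, map_add, map_smul, P.lift, (σ.exct x _).2 ⟨_, rfl⟩, smul_zero, add_zero,
    ← eq_smul_gv]

/-- `γ(f)` crosses `γ(e)` with larger slope. -/
def Up (ε : ℕ → Bool) (e f : ℕ × ℕ) : Prop :=
  max e.1 f.1 < min e.2 f.2 ∧
    ((f.1 < e.1 ∧ ε e.1 = true) ∨ (e.1 < f.1 ∧ ε f.1 = false)) ∧
    ((e.2 < f.2 ∧ ε e.2 = false) ∨ (f.2 < e.2 ∧ ε f.2 = true))

/-- `γ(e)` and `γ(f)` are adjacent and `Ext(f, e)` is nonzero. -/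
def Adj (ε : ℕ → Bool) (e f : ℕ × ℕ) : Prop :=
  (e.2 = f.1 ∧ ε e.2 = false) ∨ (f.2 = e.1 ∧ ε e.1 = true)

theorem extZero_of_not {e f : ℕ × ℕ} (he : ValidPair n e) (hf : ValidPair n f)
    (hadj : ¬Adj ε e f) (hup : ¬Up ε e f) : ExtZero (IR k n ε f) (IR k n ε e) := by
  intro σ
  obtain ⟨w, δ, P⟩ := exists_pres σ
  have hIe := Ins_iff he
  have hIf := Ins_iff hf
  obtain ⟨a, b⟩ := e
  obtain ⟨c, d⟩ := f
  obtain ⟨hab, hbn⟩ := he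
  obtain ⟨hcd, hdn⟩ := hf
  simp only [Adj, Up, not_or, not_and] at hadj hup hIe hIf hab hcd hbn hdn
  by_cases hov : max a c < min b d
  swap
  · refine splits_of_beta P (fun _ => 0) (fun _ _ => rfl) (fun _ _ => rfl) ?_ ?_
    · intro i hε h1 h2
      rw [hIf] at h1
      rw [hIe] at h2
      have : d = a := by omega
      have : i = a := by omega
      subst this
      exact absurd hε (hadj.2 (by omega))
    · intro i hε h1 h2
      rw [hIf] at h1
      rw [hIe] at h2
      have : b = c := by omega
      have : i = b := by omega
      subst this
      exact absurd hε (hadj.1 (by omega))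
  obtain ⟨η, hη⟩ : ∃ η : ℕ → k, ∀ i, η i = if ε i = true then δ i else -δ i := ⟨_, fun _ => rfl⟩
  obtain ⟨β, hβ0, hβ⟩ : ∃ β : ℕ → k, (∀ x, ¬(max a c < x ∧ x ≤ min b d) → β x = 0) ∧
      ∀ i, ((ε i = true ∧ c < i ∧ i ≤ d ∧ a < i + 1 ∧ i + 1 ≤ b) ∨
        (ε i = false ∧ c < i + 1 ∧ i + 1 ≤ d ∧ a < i ∧ i ≤ b)) → β (i + 1) = η i + β i := by
    by_cases hL : (c < a ∧ ε a = true) ∨ (a < c ∧ ε c = false)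
    · have hR := hup hov hL
      refine ⟨fun x => if max a c < x ∧ x ≤ min b d then
        ∑ i ∈ Finset.Ico (max a c) x, η i else 0, fun x hx => if_neg hx, ?_⟩
      intro i hi
      have hi1 : max a c ≤ i := by omega
      have hi2 : i < min b d := by
        by_contra hcon
        have h1 : i ≤ min b d := by omega
        rcases hi with ⟨hε, hi⟩ | ⟨hε, hi⟩
        · have : i = d := by omega
          subst this
          exact hR.2 (by omega) hε
        · have : i = b := by omega
          subst this
          exact hR.1 (by omega) hε
      beta_reduce
      rw [if_pos (show max a c < i + 1 ∧ i + 1 ≤ min b d by omega), Finset.sum_Ico_succ_top hi1]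
      split_ifs with h
      · exact add_comm _ _
      · have : max a c = i := by omega
        rw [this]; simp
    · refine ⟨fun x => if max a c < x ∧ x ≤ min b d then
        -∑ i ∈ Finset.Ico x (min b d + 1), η i else 0, fun x hx => if_neg hx, ?_⟩
      intro i hi
      have hi1 : i ≤ min b d := by omega
      have hi2 : max a c < i := by
        by_contra hcon
        rcases hi with ⟨hε, hi⟩ | ⟨hε, hi⟩
        · have : i = a := by omega
          subst this
          exact hL (Or.inl ⟨by omega, hε⟩)
        · have : i = c := by omega
          subst this
          exact hL (Or.inr ⟨by omega, hε⟩)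
      beta_reduce
      rw [if_pos (show max a c < i ∧ i ≤ min b d by omega),
        Finset.sum_eq_sum_Ico_succ_bot (show i < min b d + 1 by omega)]
      split_ifs with h
      · ring
      · have : min b d = i := by omega
        rw [this]; simp
  refine splits_of_beta P β ?_ ?_ ?_ ?_
  · intro x hx
    rw [hIe] at hx
    exact hβ0 x (by omega)
  · intro x hx
    rw [hIf] at hx
    exact hβ0 x (by omega)
  · intro i hε h1 h2
    rw [hIf] at h1
    rw [hIe] at h2
    rw [hβ i (Or.inl ⟨hε, h1.1, h1.2, h2.1, h2.2⟩), hη, if_pos hε]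
  · intro i hε h1 h2
    rw [hIf] at h1
    rw [hIe] at h2
    rw [hβ i (Or.inr ⟨hε, h1.1, h1.2, h2.1, h2.2⟩), hη, if_neg (by simp [hε])]
    ring

/-- Canonical morphism between intervals. -/
def canHom (e g : ℕ × ℕ)
    (h1 : ∀ i, ε i = true → Ins n e i → Ins n g (i + 1) → (Ins n g i ↔ Ins n e (i + 1)))
    (h2 : ∀ i, ε i = false → Ins n e (i + 1) → Ins n g i → (Ins n g (i + 1) ↔ Ins n e i)) :
    (IR k n ε e).Hom (IR k n ε g) :=
  homFrom e (IR k n ε g) (gv g)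
    (by
      intro i hε hi
      rw [gv_fwd g i hε]
      by_cases h : Ins n g (i + 1)
      · simp only [h1 i hε hi h]
      · rw [gv_zero h]; simp)
    (by
      intro i hε hi
      rw [gv_bwd g i hε]
      by_cases h : Ins n g i
      · simp only [h2 i hε hi h]
      · rw [gv_zero h]; simp)

theorem canHom_app (e g : ℕ × ℕ) (h1 h2) (x : ℕ) (u : (IR k n ε e).V x) :
    (canHom e g h1 h2).app x u = cf e x u • gv g x := rfl

/-! ### Adjacent intervals -/

theorem adj_ext {e f g : ℕ × ℕ} (he : ValidPair n e) (hg' : ValidPair n g) (hne : e ≠ g) (m : ℕ)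
    (hg : ∀ x, Ins n g x ↔ Ins n e x ∨ Ins n f x) (hdis : ∀ x, Ins n e x → ¬Ins n f x)
    (m1 : ∀ i, ε i = true → Ins n f i → Ins n e (i + 1) → i = m)
    (m2 : ∀ i, ε i = false → Ins n f (i + 1) → Ins n e i → i = m)
    (s1 : ∀ i, ε i = true → Ins n e i → Ins n g (i + 1) → Ins n e (i + 1))
    (s2 : ∀ i, ε i = false → Ins n e (i + 1) → Ins n g i → Ins n e i) :
    ExtOneDimIndecMid (IR k n ε f) (IR k n ε e) := by
  let ι : (IR k n ε e).Hom (IR k n ε g) := canHom e g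
    (fun i hε h1 h2 => ⟨fun _ => s1 i hε h1 h2, fun _ => (hg i).2 (Or.inl h1)⟩)
    (fun i hε h1 h2 => ⟨fun _ => s2 i hε h1 h2, fun _ => (hg _).2 (Or.inl h1)⟩)
  let π : (IR k n ε g).Hom (IR k n ε f) := canHom g f
    (fun i hε h1 h2 => by
      refine ⟨fun _ => (hg _).2 (Or.inr h2), fun h3 => ?_⟩
      rcases (hg i).1 h1 with h4 | h4
      · exact absurd h2 (hdis _ (s1 i hε h4 h3))
      · exact h4)
    (fun i hε h1 h2 => by
      refine ⟨fun _ => (hg _).2 (Or.inr h2), fun h3 => ?_⟩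
      rcases (hg (i + 1)).1 h1 with h4 | h4
      · exact absurd h2 (hdis _ (s2 i hε h4 h3))
      · exact h4)
  have hι : ∀ x u, ι.app x u = cf e x u • gv g x := fun x u => rfl
  have hπ : ∀ x u, π.app x u = cf g x u • gv f x := fun x u => rfl
  have cι : ∀ x u, cf g x (ι.app x u) = cf e x u := by
    intro x u
    rw [hι, map_smul, cf_gv]
    by_cases h : Ins n e x
    · simp [(hg x).2 (Or.inl h)]
    · simp [cf_zero h]
  have cπ : ∀ x u, cf f x (π.app x u) = if Ins n f x then cf g x u else 0 := by
    intro x u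
    rw [hπ, map_smul, cf_gv]
    by_cases h : Ins n f x <;> simp [h]
  let σ : SES (IR k n ε e) (IR k n ε f) :=
    { E := IR k n ε g
      ι := ι
      π := π
      inj := fun x u v h => cf_inj (by rw [← cι, h, cι])
      surj := fun x u => ⟨cf f x u • gv g x, cf_inj (by
        rw [cπ, map_smul, cf_gv]
        by_cases h : Ins n f x
        · simp [h, (hg x).2 (Or.inr h)]
        · simp [h, cf_zero h])⟩
      exct := fun x v => by
        constructor
        · intro h
          refine ⟨cf g x v • gv e x, cf_inj ?_⟩
          rw [cι, map_smul, cf_gv]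
          by_cases h1 : Ins n e x
          · simp [h1]
          · by_cases h2 : Ins n f x
            · have h3 := cπ x v
              rw [h, map_zero, if_pos h2] at h3
              simp [← h3]
            · have h3 : ¬Ins n g x := by rw [hg]; tauto
              simp [cf_zero h3]
        · rintro ⟨u, rfl⟩
          apply cf_inj
          rw [cπ, cι, map_zero]
          by_cases h1 : Ins n e x
          · simp [hdis x h1]
          · simp [cf_zero h1] }
  refine ⟨σ, ?_, IR_indec hg', ?_⟩
  · rintro ⟨r, hr⟩
    apply IR_not_isZero (k := k) (ε := ε) he
    intro x v
    rw [← hr x v]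
    exact comp_zero he hg' hne ι r x v
  · intro τ hτ
    obtain ⟨w, δ, P⟩ := exists_pres τ
    have hδ : δ m ≠ 0 := by
      intro h0
      apply hτ
      refine splits_of_beta P (fun _ => 0) (fun _ _ => rfl) (fun _ _ => rfl) ?_ ?_
      · intro i hε h1 h2
        rw [m1 i hε h1 h2, h0, add_zero]
      · intro i hε h1 h2
        rw [m2 i hε h1 h2, h0, add_zero]
    let c := (δ m)⁻¹
    have hc : c ≠ 0 := inv_ne_zero hδ
    have hcd : c * δ m = 1 := inv_mul_cancel₀ hδ
    have bz : ∀ x, ¬Ins n e x → τ.ι.app x (gv e x) = 0 := fun x h => by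
      rw [gv_zero h, map_zero]
    let φ : (IR k n ε g).Hom τ.E := homFrom g τ.E (fun x => τ.ι.app x (gv e x) + c • w x)
      (by
        intro i hε hi
        have e1 : (if Ins n g (i + 1) then τ.ι.app (i + 1) (gv e (i + 1)) + c • w (i + 1)
            else 0) = τ.ι.app (i + 1) (gv e (i + 1)) + c • w (i + 1) := by
          split_ifs with h
          · rfl
          · rw [hg, not_or] at h
            rw [bz _ h.1, P.zero _ h.2, smul_zero, add_zero]
        rw [e1, map_add, map_smul, ← τ.ι.comm_fwd, gv_fwd e i hε]
        rcases (hg i).1 hi with h | h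
        · rw [if_pos h, P.zero i (hdis i h), map_zero, smul_zero]
          by_cases h2 : Ins n f (i + 1)
          · exact absurd h2 (hdis _ (s1 i hε h ((hg _).2 (Or.inr h2))))
          · rw [P.zero _ h2, smul_zero]
        · rw [if_neg (fun h' => hdis i h' h), map_zero, zero_add, P.fwd i hε h, smul_add,
            smul_smul, add_comm (c • w (i + 1))]
          by_cases h2 : Ins n e (i + 1)
          · rw [m1 i hε h h2, hcd, one_smul]
          · rw [bz _ h2, smul_zero])
      (by
        intro i hε hi
        have e1 : (if Ins n g i then τ.ι.app i (gv e i) + c • w i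
            else 0) = τ.ι.app i (gv e i) + c • w i := by
          split_ifs with h
          · rfl
          · rw [hg, not_or] at h
            rw [bz _ h.1, P.zero _ h.2, smul_zero, add_zero]
        rw [e1, map_add, map_smul, ← τ.ι.comm_bwd, gv_bwd e i hε]
        rcases (hg (i + 1)).1 hi with h | h
        · rw [if_pos h, P.zero (i + 1) (hdis (i + 1) h), map_zero, smul_zero]
          by_cases h2 : Ins n f i
          · exact absurd h2 (hdis _ (s2 i hε h ((hg _).2 (Or.inr h2))))
          · rw [P.zero _ h2, smul_zero]
        · rw [if_neg (fun h' => hdis (i + 1) h' h), map_zero, zero_add, P.bwd i hε h, smul_add,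
            smul_smul, add_comm (c • w i)]
          by_cases h2 : Ins n e i
          · rw [m2 i hε h h2, hcd, one_smul]
          · rw [bz _ h2, smul_zero])
    have hφ : ∀ x u, φ.app x u = cf g x u • (τ.ι.app x (gv e x) + c • w x) := fun x u => rfl
    have g1 : ∀ x (v : (IR k n ε e).V x), φ.app x (σ.ι.app x v) = τ.ι.app x v := by
      intro x v
      change φ.app x (ι.app x v) = _
      rw [hφ, cι]
      by_cases h : Ins n e x
      · rw [P.zero x (hdis x h), smul_zero, add_zero, ← map_smul, ← eq_smul_gv]
      · have : v = 0 := cf_inj (by rw [cf_zero h, map_zero])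
        rw [this]; simp
    have g2 : ∀ x (v : σ.E.V x), τ.π.app x (φ.app x v) = c • σ.π.app x v := by
      intro x v
      change τ.π.app x (φ.app x v) = c • π.app x v
      rw [hφ, hπ, map_smul, map_add, (τ.exct x _).2 ⟨_, rfl⟩, zero_add, map_smul, P.lift,
        smul_comm]
    exact ⟨c, hc, φ, five_bij σ τ φ c hc g1 g2, g1, g2⟩

theorem ext_of_adj {e f : ℕ × ℕ} (he : ValidPair n e) (hf : ValidPair n f)
    (h : Adj ε e f) : ExtOneDimIndecMid (IR k n ε f) (IR k n ε e) := by
  have hIe := Ins_iff he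
  have hIf := Ins_iff hf
  obtain ⟨a, b⟩ := e
  obtain ⟨c, d⟩ := f
  have he' := he
  obtain ⟨hab, hbn⟩ := he
  obtain ⟨hcd, hdn⟩ := hf
  simp only [Adj] at h hIe hIf hab hcd hbn hdn
  rcases h with ⟨h, hε⟩ | ⟨h, hε⟩
  · subst h
    have hg : ValidPair n (a, d) := ⟨by simp only; omega, by simp only; omega⟩
    have hIg := Ins_iff hg
    simp only at hIg
    refine adj_ext (g := (a, d)) he' hg ?_ b ?_ ?_ ?_ ?_ ?_ ?_
    · intro h; rw [Prod.mk.injEq] at h; omega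
    all_goals simp only [hIe, hIf, hIg]
    · omega
    · omega
    · omega
    · omega
    · intro i hi h1 h2
      have : i ≠ b := by rintro rfl; simp [hε] at hi
      omega
    · omega
  · subst h
    have hg : ValidPair n (c, b) := ⟨by simp only; omega, by simp only; omega⟩
    have hIg := Ins_iff hg
    simp only at hIg
    refine adj_ext (g := (c, b)) he' hg ?_ d ?_ ?_ ?_ ?_ ?_ ?_
    · intro h; rw [Prod.mk.injEq] at h; omega
    all_goals simp only [hIe, hIf, hIg]
    · omega
    · omega
    · omega
    · omega
    · omega
    · intro i hi h1 h2
      have : i ≠ d := by rintro rfl; simp [hε] at hi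
      omega

/-! ### Crossing intervals -/

theorem can_cond {e g : ℕ × ℕ} (he : ValidPair n e) (hg : ValidPair n g)
    (l1 : g.1 < e.1 → ε e.1 = true) (l2 : e.1 < g.1 → ε g.1 = false)
    (r1 : e.2 < g.2 → ε e.2 = false) (r2 : g.2 < e.2 → ε g.2 = true) :
    (∀ i, ε i = true → Ins n e i → Ins n g (i + 1) → (Ins n g i ↔ Ins n e (i + 1))) ∧
    (∀ i, ε i = false → Ins n e (i + 1) → Ins n g i → (Ins n g (i + 1) ↔ Ins n e i)) := by
  have hIe := Ins_iff he
  have hIg := Ins_iff hg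
  obtain ⟨a, b⟩ := e
  obtain ⟨c, d⟩ := g
  simp only at l1 l2 r1 r2 hIe hIg
  simp only [hIe, hIg]
  constructor
  · intro i hi h1 h2
    have n1 : a < c → i ≠ c := by rintro h rfl; simp [l2 h] at hi
    have n2 : b < d → i ≠ b := by rintro h rfl; simp [r1 h] at hi
    omega
  · intro i hi h1 h2
    have n1 : c < a → i ≠ a := by rintro h rfl; simp [l1 h] at hi
    have n2 : d < b → i ≠ d := by rintro h rfl; simp [r2 h] at hi
    omega

theorem cf_canHom (e g : ℕ × ℕ) (h1 h2) (x : ℕ) (u : (IR k n ε e).V x) :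
    cf g x ((canHom e g h1 h2).app x u) = if Ins n g x then cf e x u else 0 := by
  rw [canHom_app, map_smul, cf_gv]; simp

theorem up_ses {e f : ℕ × ℕ} (he : ValidPair n e) (hf : ValidPair n f) (h : Up ε e f) :
    ∃ σ : SES (IR k n ε e) (IR k n ε f), ¬σ.Splits ∧
      σ.E = (IR k n ε (e.1, f.2)).dsum (IR k n ε (f.1, e.2)) := by
  have he' := he
  have hf' := hf
  have hIe := Ins_iff he
  have hIf := Ins_iff hf
  obtain ⟨a, b⟩ := e
  obtain ⟨c, d⟩ := f
  obtain ⟨hab, hbn⟩ := he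
  obtain ⟨hcd, hdn⟩ := hf
  obtain ⟨hov, hL, hR⟩ := h
  simp only at hab hcd hbn hdn hov hL hR hIe hIf ⊢
  have hg1 : ValidPair n (a, d) := ⟨by simp only; omega, by simp only; omega⟩
  have hg2 : ValidPair n (c, b) := ⟨by simp only; omega, by simp only; omega⟩
  have hI1 := Ins_iff hg1
  have hI2 := Ins_iff hg2
  simp only at hI1 hI2
  have l1 : c < a → ε a = true := fun h => by
    rcases hL with h' | h'
    · exact h'.2
    · omega
  have l2 : a < c → ε c = false := fun h => by
    rcases hL with h' | h'
    · omega
    · exact h'.2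
  have r1 : b < d → ε b = false := fun h => by
    rcases hR with h' | h'
    · exact h'.2
    · omega
  have r2 : d < b → ε d = true := fun h => by
    rcases hR with h' | h'
    · omega
    · exact h'.2
  have hac : a ≠ c := by omega
  have hbd : b ≠ d := by omega
  have c1 := can_cond (ε := ε) (e := (a, b)) (g := (a, d)) he' hg1 (fun h => absurd h (lt_irrefl _))
    (fun h => absurd h (lt_irrefl _)) r1 r2
  have c2 := can_cond (ε := ε) (e := (a, b)) (g := (c, b)) he' hg2 l1 l2
    (fun h => absurd h (lt_irrefl _)) (fun h => absurd h (lt_irrefl _))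
  have c3 := can_cond (ε := ε) (e := (a, d)) (g := (c, d)) hg1 hf' l1 l2
    (fun h => absurd h (lt_irrefl _)) (fun h => absurd h (lt_irrefl _))
  have c4 := can_cond (ε := ε) (e := (c, b)) (g := (c, d)) hg2 hf' (fun h => absurd h (lt_irrefl _))
    (fun h => absurd h (lt_irrefl _)) r1 r2
  let i1 : (IR k n ε (a, b)).Hom (IR k n ε (a, d)) := canHom _ _ c1.1 c1.2
  let i2 : (IR k n ε (a, b)).Hom (IR k n ε (c, b)) := canHom _ _ c2.1 c2.2
  let p1 : (IR k n ε (a, d)).Hom (IR k n ε (c, d)) := canHom _ _ c3.1 c3.2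
  let p2 : (IR k n ε (c, b)).Hom (IR k n ε (c, d)) := canHom _ _ c4.1 c4.2
  have hi1 : ∀ x u, cf (a, d) x (i1.app x u) = if Ins n (a, d) x then cf (a, b) x u else 0 :=
    fun x u => cf_canHom _ _ _ _ x u
  have hi2 : ∀ x u, cf (c, b) x (i2.app x u) = if Ins n (c, b) x then cf (a, b) x u else 0 :=
    fun x u => cf_canHom _ _ _ _ x u
  have hp1 : ∀ x u, cf (c, d) x (p1.app x u) = if Ins n (c, d) x then cf (a, d) x u else 0 :=
    fun x u => cf_canHom _ _ _ _ x u
  have hp2 : ∀ x u, cf (c, d) x (p2.app x u) = if Ins n (c, d) x then cf (c, b) x u else 0 :=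
    fun x u => cf_canHom _ _ _ _ x u
  let D := (IR k n ε (a, d)).dsum (IR k n ε (c, b))
  let ι : (IR k n ε (a, b)).Hom D := pairH i1 i2
  let π : D.Hom (IR k n ε (c, d)) := copairH p1 (p2.smul (-1))
  have hπ : ∀ x (v : D.V x), cf (c, d) x (π.app x v) =
      if Ins n (c, d) x then cf (a, d) x v.1 - cf (c, b) x v.2 else 0 := by
    intro x v
    change cf (c, d) x (p1.app x v.1 + (-1 : k) • p2.app x v.2) = _
    rw [map_add, map_smul, hp1, hp2]
    split_ifs
    · simp [sub_eq_add_neg]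
    · simp
  let σ : SES (IR k n ε (a, b)) (IR k n ε (c, d)) :=
    { E := D
      ι := ι
      π := π
      inj := fun x u v h => by
        apply cf_inj
        by_cases hx : Ins n (a, b) x
        · have h1 : i1.app x u = i1.app x v := congrArg Prod.fst h
          have h2 : i2.app x u = i2.app x v := congrArg Prod.snd h
          have h3 := hi1 x u
          have h4 := hi2 x u
          rw [h1, hi1] at h3
          rw [h2, hi2] at h4
          by_cases hy : Ins n (a, d) x
          · simpa [hy] using h3.symm
          · have hz : Ins n (c, b) x := by
              rw [hI2]; rw [hIe] at hx; rw [hI1] at hy; omega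
            simpa [hz] using h4.symm
        · rw [cf_zero hx, cf_zero hx]
      surj := fun x u => by
        by_cases hx : Ins n (c, d) x
        · by_cases hy : Ins n (a, d) x
          · refine ⟨(cf (c, d) x u • gv (a, d) x, 0), cf_inj ?_⟩
            refine (hπ x _).trans ?_
            rw [if_pos hx]
            simp [map_smul, cf_gv, hy]
          · have hz : Ins n (c, b) x := by
              rw [hI2]; rw [hIf] at hx; rw [hI1] at hy; omega
            refine ⟨(0, -cf (c, d) x u • gv (c, b) x), cf_inj ?_⟩
            refine (hπ x _).trans ?_
            rw [if_pos hx]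
            simp [map_smul, cf_gv, hz]
        · exact ⟨0, cf_inj (by rw [cf_zero hx, cf_zero hx])⟩
      exct := fun x v => by
        constructor
        · intro h
          have h0 := hπ x v
          rw [h, map_zero] at h0
          have hcase : (¬Ins n (a, d) x → cf (a, d) x v.1 = 0) ∧
            (¬Ins n (c, b) x → cf (c, b) x v.2 = 0) := ⟨fun h => cf_zero h _, fun h => cf_zero h _⟩
          suffices hs : ∃ t : k, (Ins n (a, b) x ∨ t = 0) ∧
              (Ins n (a, d) x → cf (a, d) x v.1 = t) ∧ (Ins n (c, b) x → cf (c, b) x v.2 = t) by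
            obtain ⟨t, ht0, ht1, ht2⟩ := hs
            have ht : (if Ins n (a, b) x then t else 0) = t := by
              split_ifs with hh
              · rfl
              · exact (ht0.resolve_left hh).symm
            have hcf : cf (a, b) x (t • gv (a, b) x : (IR k n ε (a, b)).V x) = t := by
              rw [map_smul, cf_gv]; simpa using ht
            refine ⟨t • gv (a, b) x, Prod.ext ?_ ?_⟩
            · change i1.app x (t • gv (a, b) x) = v.1
              apply cf_inj
              rw [hi1, hcf]
              split_ifs with hh
              · exact (ht1 hh).symm
              · exact (hcase.1 hh).symm
            · change i2.app x (t • gv (a, b) x) = v.2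
              apply cf_inj
              rw [hi2, hcf]
              split_ifs with hh
              · exact (ht2 hh).symm
              · exact (hcase.2 hh).symm
          by_cases hx1 : Ins n (a, d) x
          · by_cases hx2 : Ins n (c, b) x
            · have hx3 : Ins n (a, b) x := by
                rw [hIe]; rw [hI1] at hx1; rw [hI2] at hx2; omega
              have hx4 : Ins n (c, d) x := by
                rw [hIf]; rw [hI1] at hx1; rw [hI2] at hx2; omega
              rw [if_pos hx4] at h0
              exact ⟨_, Or.inl hx3, fun _ => rfl, fun _ => (sub_eq_zero.1 h0.symm).symm⟩
            · refine ⟨_, ?_, fun _ => rfl, fun h => absurd h hx2⟩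
              by_cases hx3 : Ins n (a, b) x
              · exact Or.inl hx3
              · right
                have hx4 : Ins n (c, d) x := by
                  rw [hIf]; rw [hI1] at hx1; rw [hI2] at hx2; rw [hIe] at hx3; omega
                rw [if_pos hx4, hcase.2 hx2, sub_zero] at h0
                exact h0.symm
          · by_cases hx2 : Ins n (c, b) x
            · refine ⟨_, ?_, fun h => absurd h hx1, fun _ => rfl⟩
              by_cases hx3 : Ins n (a, b) x
              · exact Or.inl hx3
              · right
                have hx4 : Ins n (c, d) x := by
                  rw [hIf]; rw [hI1] at hx1; rw [hI2] at hx2; rw [hIe] at hx3; omega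
                rw [if_pos hx4, hcase.1 hx1, zero_sub] at h0
                exact neg_eq_zero.1 h0.symm
            · exact ⟨0, Or.inr rfl, fun h => absurd h hx1, fun h => absurd h hx2⟩
        · rintro ⟨u, rfl⟩
          apply cf_inj
          rw [hπ, map_zero]
          change (if Ins n (c, d) x then cf (a, d) x (i1.app x u) - cf (c, b) x (i2.app x u)
            else 0) = 0
          rw [hi1, hi2]
          by_cases hx3 : Ins n (a, b) x
          · by_cases hx4 : Ins n (c, d) x
            · have hx1 : Ins n (a, d) x := by
                rw [hI1]; rw [hIe] at hx3; rw [hIf] at hx4; omega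
              have hx2 : Ins n (c, b) x := by
                rw [hI2]; rw [hIe] at hx3; rw [hIf] at hx4; omega
              simp [hx1, hx2]
            · simp [hx4]
          · simp [cf_zero hx3] }
  refine ⟨σ, ?_, rfl⟩
  rintro ⟨r, hr⟩
  apply IR_not_isZero (k := k) (ε := ε) he'
  intro x v
  rw [← hr x v]
  have e1 : σ.ι.app x v = (in1 (IR k n ε (a, d)) (IR k n ε (c, b))).app x (i1.app x v) +
      (in2 (IR k n ε (a, d)) (IR k n ε (c, b))).app x (i2.app x v) := by
    refine Prod.ext ?_ ?_
    · exact (add_zero _).symm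
    · exact (zero_add _).symm
  rw [e1, map_add]
  have z1 := comp_zero he' hg1 (by intro h; rw [Prod.mk.injEq] at h; omega) i1
    (r.comp (in1 (IR k n ε (a, d)) (IR k n ε (c, b)))) x v
  have z2 := comp_zero he' hg2 (by intro h; rw [Prod.mk.injEq] at h; omega) i2
    (r.comp (in2 (IR k n ε (a, d)) (IR k n ε (c, b)))) x v
  refine (congrArg₂ (· + ·) z1 z2).trans (add_zero _)

/-! ### Geometry of the polygon -/

/-- Height of the line through the segment `e` at abscissa `x`. -/
def Ht (p : ℕ → ℂ) (e : ℕ × ℕ) (x : ℝ) : ℝ := (p e.1).im + slope p e * (x - (p e.1).re)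

theorem Ht_left (p : ℕ → ℂ) (e : ℕ × ℕ) : Ht p e (p e.1).re = (p e.1).im := by
  simp [Ht]

theorem Ht_right (p : ℕ → ℂ) (e : ℕ × ℕ) (h : (p e.1).re < (p e.2).re) :
    Ht p e (p e.2).re = (p e.2).im := by
  unfold Ht slope
  rw [div_mul_cancel₀ _ (by linarith)]
  ring

theorem seg_iff (p : ℕ → ℂ) (e : ℕ × ℕ) (h : (p e.1).re < (p e.2).re) (z : ℂ) :
    z ∈ Seg p e ↔ (p e.1).re ≤ z.re ∧ z.re ≤ (p e.2).re ∧ z.im = Ht p e z.re := by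
  have hpos : 0 < (p e.2).re - (p e.1).re := by linarith
  unfold Seg
  rw [segment_eq_image]
  constructor
  · rintro ⟨t, ⟨h0, h1⟩, rfl⟩
    have hre : ((1 - t) • p e.1 + t • p e.2).re = (1 - t) * (p e.1).re + t * (p e.2).re := by simp
    have him : ((1 - t) • p e.1 + t • p e.2).im = (1 - t) * (p e.1).im + t * (p e.2).im := by simp
    beta_reduce
    rw [hre, him]
    refine ⟨by nlinarith, by nlinarith, ?_⟩
    unfold Ht slope
    field_simp
    ring
  · rintro ⟨h1, h2, h3⟩
    refine ⟨(z.re - (p e.1).re) / ((p e.2).re - (p e.1).re),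
      ⟨div_nonneg (by linarith) hpos.le, (div_le_one hpos).2 (by linarith)⟩, ?_⟩
    apply Complex.ext
    · simp only [Complex.add_re, Complex.real_smul, Complex.re_ofReal_mul]
      field_simp
      ring
    · simp only [Complex.add_im, Complex.real_smul, Complex.im_ofReal_mul]
      rw [h3]
      unfold Ht slope
      field_simp
      ring

theorem mem_convex_vert {S : Set ℂ} (hS : Convex ℝ S) {z1 z2 z : ℂ} (h1 : z1 ∈ S) (h2 : z2 ∈ S)
    (hr1 : z1.re = z.re) (hr2 : z2.re = z.re) (hi1 : z1.im ≤ z.im) (hi2 : z.im ≤ z2.im) :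
    z ∈ S := by
  rcases eq_or_lt_of_le hi1 with h | h
  · have : z1 = z := Complex.ext hr1 h
    rwa [← this]
  · have hpos : 0 < z2.im - z1.im := by linarith
    have hmem := hS h1 h2 (a := (z2.im - z.im) / (z2.im - z1.im))
      (b := (z.im - z1.im) / (z2.im - z1.im)) (div_nonneg (by linarith) hpos.le)
      (div_nonneg (by linarith) hpos.le) (by field_simp; ring)
    convert hmem using 1
    apply Complex.ext
    · simp only [Complex.add_re, Complex.real_smul, Complex.re_ofReal_mul]
      rw [hr1, hr2]
      field_simp
      ring
    · simp only [Complex.add_im, Complex.real_smul, Complex.im_ofReal_mul]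
      field_simp
      ring

theorem side {p : ℕ → ℂ} (hp : PolyPts n ε p) {a b c : ℕ} (hac : a < c) (hcb : c < b)
    (hb : b ≤ n + 2) : (ε c = true → Ht p (a, b) (p c).re < (p c).im) ∧
      (ε c = false → (p c).im < Ht p (a, b) (p c).re) := by
  obtain ⟨hre, hL, hud, hconv⟩ := hp
  have hc := hconv c (by omega)
  have hmem : ∀ j, j ≤ n + 2 → j ≠ c → p j ∈ convexHull ℝ (p '' {j | j ≤ n + 2 ∧ j ≠ c}) :=
    fun j h1 h2 => subset_convexHull _ _ ⟨j, ⟨h1, h2⟩, rfl⟩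
  have hcv := convex_convexHull ℝ (p '' {j | j ≤ n + 2 ∧ j ≠ c})
  have hseg : ∀ e : ℕ × ℕ, e.1 < c → c < e.2 → e.2 ≤ n + 2 →
      (⟨(p c).re, Ht p e (p c).re⟩ : ℂ) ∈ convexHull ℝ (p '' {j | j ≤ n + 2 ∧ j ≠ c}) := by
    intro e h1 h2 h3
    have h4 : (⟨(p c).re, Ht p e (p c).re⟩ : ℂ) ∈ Seg p e := by
      rw [seg_iff p e (hre _ _ (by omega) h3)]
      exact ⟨(hre _ _ h1 (by omega)).le, (hre _ _ h2 h3).le, rfl⟩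
    exact hcv.segment_subset (hmem e.1 (by omega) (by omega)) (hmem e.2 h3 (by omega)) h4
  have hz := hseg (a, b) hac hcb hb
  have hz' := hseg (0, n + 2) (by simp only; omega) (by simp only; omega) le_rfl
  have hH : Ht p (0, n + 2) (p c).re = (p 0).im := by simp [Ht, slope, hL]
  rw [hH] at hz'
  have hu := hud c (by omega) (by omega)
  constructor
  · intro hε
    by_contra hcon
    exact hc (mem_convex_vert hcv hz' hz rfl rfl (hu.1 hε).le (not_lt.1 hcon))
  · intro hε
    by_contra hcon
    exact hc (mem_convex_vert hcv hz hz' rfl rfl (not_lt.1 hcon) (hu.2 hε).le)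

theorem sign_left {p : ℕ → ℂ} (hp : PolyPts n ε p) {e f : ℕ × ℕ} (he : ValidPair n e)
    (hf : ValidPair n f) (hov : max e.1 f.1 < min e.2 f.2) :
    (e.1 = f.1 ∧ Ht p f (p (max e.1 f.1)).re = Ht p e (p (max e.1 f.1)).re) ∨
    (((f.1 < e.1 ∧ ε e.1 = true) ∨ (e.1 < f.1 ∧ ε f.1 = false)) ∧
      Ht p f (p (max e.1 f.1)).re < Ht p e (p (max e.1 f.1)).re) ∨
    (((e.1 < f.1 ∧ ε f.1 = true) ∨ (f.1 < e.1 ∧ ε e.1 = false)) ∧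
      Ht p e (p (max e.1 f.1)).re < Ht p f (p (max e.1 f.1)).re) := by
  obtain ⟨he1, he2⟩ := he
  obtain ⟨hf1, hf2⟩ := hf
  rcases lt_trichotomy e.1 f.1 with h | h | h
  · have hs := side hp h (show f.1 < e.2 by omega) he2
    rw [max_eq_right h.le, Ht_left p f]
    cases hε : ε f.1 with
    | true => exact Or.inr (Or.inr ⟨Or.inl ⟨h, rfl⟩, hs.1 hε⟩)
    | false => exact Or.inr (Or.inl ⟨Or.inr ⟨h, rfl⟩, hs.2 hε⟩)
  · left
    refine ⟨h, ?_⟩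
    rw [← h, max_self, Ht_left p e, h, Ht_left p f]
  · have hs := side hp h (show e.1 < f.2 by omega) hf2
    rw [max_eq_left h.le, Ht_left p e]
    cases hε : ε e.1 with
    | true => exact Or.inr (Or.inl ⟨Or.inl ⟨h, rfl⟩, hs.1 hε⟩)
    | false => exact Or.inr (Or.inr ⟨Or.inr ⟨h, rfl⟩, hs.2 hε⟩)

theorem sign_right {p : ℕ → ℂ} (hp : PolyPts n ε p) {e f : ℕ × ℕ} (he : ValidPair n e)
    (hf : ValidPair n f) (hov : max e.1 f.1 < min e.2 f.2) :
    (e.2 = f.2 ∧ Ht p f (p (min e.2 f.2)).re = Ht p e (p (min e.2 f.2)).re) ∨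
    (((e.2 < f.2 ∧ ε e.2 = false) ∨ (f.2 < e.2 ∧ ε f.2 = true)) ∧
      Ht p e (p (min e.2 f.2)).re < Ht p f (p (min e.2 f.2)).re) ∨
    (((f.2 < e.2 ∧ ε f.2 = false) ∨ (e.2 < f.2 ∧ ε e.2 = true)) ∧
      Ht p f (p (min e.2 f.2)).re < Ht p e (p (min e.2 f.2)).re) := by
  obtain ⟨he1, he2⟩ := he
  obtain ⟨hf1, hf2⟩ := hf
  have re := Ht_right p e (hp.1 _ _ he1 he2)
  have rf := Ht_right p f (hp.1 _ _ hf1 hf2)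
  rcases lt_trichotomy e.2 f.2 with h | h | h
  · have hs := side hp (show f.1 < e.2 by omega) h hf2
    rw [min_eq_left h.le, re]
    cases hε : ε e.2 with
    | true => exact Or.inr (Or.inr ⟨Or.inr ⟨h, rfl⟩, hs.1 hε⟩)
    | false => exact Or.inr (Or.inl ⟨Or.inl ⟨h, rfl⟩, hs.2 hε⟩)
  · left
    refine ⟨h, ?_⟩
    rw [← h, min_self, re, h, rf]
  · have hs := side hp (show e.1 < f.2 by omega) h he2
    rw [min_eq_right h.le, rf]
    cases hε : ε f.2 with
    | true => exact Or.inr (Or.inl ⟨Or.inr ⟨h, rfl⟩, hs.1 hε⟩)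
    | false => exact Or.inr (Or.inr ⟨Or.inl ⟨h, rfl⟩, hs.2 hε⟩)

theorem Ht_diff (p : ℕ → ℂ) (e f : ℕ × ℕ) (x y z : ℝ) :
    (z - x) * (Ht p f y - Ht p e y) =
      (z - y) * (Ht p f x - Ht p e x) + (y - x) * (Ht p f z - Ht p e z) := by
  unfold Ht
  ring

theorem up_signs {p : ℕ → ℂ} (hp : PolyPts n ε p) {e f : ℕ × ℕ} (he : ValidPair n e)
    (hf : ValidPair n f) (h : Up ε e f) :
    Ht p f (p (max e.1 f.1)).re < Ht p e (p (max e.1 f.1)).re ∧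
      Ht p e (p (min e.2 f.2)).re < Ht p f (p (min e.2 f.2)).re := by
  obtain ⟨hov, hL, hR⟩ := h
  constructor
  · rcases sign_left hp he hf hov with h | h | h
    · omega
    · exact h.2
    · exfalso
      rcases hL with hL | hL <;> rcases h.1 with h | h
      · omega
      · simp [hL.2] at h
      · simp [hL.2] at h
      · omega
  · rcases sign_right hp he hf hov with h | h | h
    · omega
    · exact h.2
    · exfalso
      rcases hR with hR | hR <;> rcases h.1 with h | h
      · omega
      · simp [hR.2] at h
      · simp [hR.2] at h
      · omega

theorem max_min_re {p : ℕ → ℂ} (hp : PolyPts n ε p) {e f : ℕ × ℕ} (he : ValidPair n e)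
    (hf : ValidPair n f) :
    (p e.1).re ≤ (p (max e.1 f.1)).re ∧ (p f.1).re ≤ (p (max e.1 f.1)).re ∧
      (p (min e.2 f.2)).re ≤ (p e.2).re ∧ (p (min e.2 f.2)).re ≤ (p f.2).re ∧
      ∀ x, (p e.1).re ≤ x → (p f.1).re ≤ x → x ≤ (p e.2).re → x ≤ (p f.2).re →
        (p (max e.1 f.1)).re ≤ x ∧ x ≤ (p (min e.2 f.2)).re := by
  obtain ⟨he1, he2⟩ := he
  obtain ⟨hf1, hf2⟩ := hf
  have hmono : ∀ a b, a ≤ b → b ≤ n + 2 → (p a).re ≤ (p b).re := by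
    intro a b hab hb
    rcases eq_or_lt_of_le hab with h | h
    · rw [h]
    · exact (hp.1 a b h hb).le
  refine ⟨hmono _ _ (le_max_left _ _) (by omega), hmono _ _ (le_max_right _ _) (by omega),
    hmono _ _ (min_le_left _ _) (by omega), hmono _ _ (min_le_right _ _) (by omega), ?_⟩
  intro x h1 h2 h3 h4
  constructor
  · rcases max_choice e.1 f.1 with h | h <;> rw [h] <;> assumption
  · rcases min_choice e.2 f.2 with h | h <;> rw [h] <;> assumption

theorem up_slope {p : ℕ → ℂ} (hp : PolyPts n ε p) {e f : ℕ × ℕ} (he : ValidPair n e)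
    (hf : ValidPair n f) (h : Up ε e f) : slope p e < slope p f := by
  obtain ⟨h1, h2⟩ := up_signs hp he hf h
  have h3 := hp.1 _ _ h.1 (by have := he.2; omega)
  unfold Ht at h1 h2
  by_contra hcon
  have h4 : 0 ≤ slope p e - slope p f := by linarith [not_lt.1 hcon]
  have h5 := mul_nonneg h4 (sub_nonneg.2 h3.le)
  nlinarith

theorem cross_of_up {p : ℕ → ℂ} (hp : PolyPts n ε p) {e f : ℕ × ℕ} (he : ValidPair n e)
    (hf : ValidPair n f) (h : Up ε e f) : Cross p e f := by
  obtain ⟨h1, h2⟩ := up_signs hp he hf h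
  have h3 := hp.1 _ _ h.1 (by have := he.2; omega)
  obtain ⟨m1, m2, m3, m4, -⟩ := max_min_re hp he hf
  set x := (p (max e.1 f.1)).re with hx
  set z := (p (min e.2 f.2)).re with hz
  set A := Ht p e x - Ht p f x with hA
  set B := Ht p f z - Ht p e z with hB
  have hA0 : 0 < A := by linarith
  have hB0 : 0 < B := by linarith
  have hAB : 0 < A + B := by linarith
  let y := (B * x + A * z) / (A + B)
  have hy : y * (A + B) = B * x + A * z := div_mul_cancel₀ _ hAB.ne'
  have hxy : x < y := by
    by_contra hcon
    have := not_lt.1 hcon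
    nlinarith
  have hyz : y < z := by
    by_contra hcon
    have := not_lt.1 hcon
    nlinarith
  have hD : Ht p f y = Ht p e y := by
    have h4 := Ht_diff p e f x y z
    have h5 : (z - x) * (Ht p f y - Ht p e y) = 0 := by
      rw [h4]
      have : (z - y) * (Ht p f x - Ht p e x) + (y - x) * (Ht p f z - Ht p e z) =
        y * (A + B) - (B * x + A * z) := by rw [hA, hB]; ring
      rw [this, hy, sub_self]
    rcases mul_eq_zero.1 h5 with h6 | h6
    · linarith
    · linarith
  refine ⟨⟨y, Ht p e y⟩, ?_, ?_, ?_⟩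
  · rw [seg_iff p e (hp.1 _ _ he.1 he.2)]
    exact ⟨by simp only; linarith, by simp only; linarith, rfl⟩
  · rw [seg_iff p f (hp.1 _ _ hf.1 hf.2)]
    exact ⟨by simp only; linarith, by simp only; linarith, hD.symm⟩
  · rintro ⟨h4 | h4, -⟩
    · have := congrArg Complex.re h4
      simp only at this
      linarith
    · have := congrArg Complex.re h4
      simp only at this
      linarith

theorem cross_symm {p : ℕ → ℂ} {e f : ℕ × ℕ} (h : Cross p e f) : Cross p f e := by
  obtain ⟨z, h1, h2, h3⟩ := h
  exact ⟨z, h2, h1, fun h => h3 ⟨h.2, h.1⟩⟩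

theorem comb_ne {a b x y : ℝ} (ha : 0 ≤ a) (hb : 0 ≤ b) (hab : 0 < a + b)
    (h : (x < 0 ∧ y < 0) ∨ (0 < x ∧ 0 < y)) : ¬(a * x + b * y = 0) := by
  intro h0
  rcases h with ⟨hx, hy⟩ | ⟨hx, hy⟩ <;> rcases eq_or_lt_of_le ha with h1 | h1
  · subst h1
    have := mul_neg_of_pos_of_neg (by linarith : 0 < b) hy
    linarith
  · have := mul_neg_of_pos_of_neg h1 hx
    have := mul_nonpos_of_nonneg_of_nonpos hb hy.le
    linarith
  · subst h1
    have := mul_pos (by linarith : 0 < b) hy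
    linarith
  · have := mul_pos h1 hx
    have := mul_nonneg hb hy.le
    linarith

theorem up_of_cross {p : ℕ → ℂ} (hp : PolyPts n ε p) {e f : ℕ × ℕ} (he : ValidPair n e)
    (hf : ValidPair n f) (hef : e ≠ f) (h : Cross p e f) : Up ε e f ∨ Up ε f e := by
  obtain ⟨w, hw1, hw2, hw3⟩ := h
  have le := hp.1 _ _ he.1 he.2
  have lf := hp.1 _ _ hf.1 hf.2
  rw [seg_iff p e le] at hw1
  rw [seg_iff p f lf] at hw2
  obtain ⟨-, -, -, -, m5⟩ := max_min_re hp he hf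
  obtain ⟨k1, k2⟩ := m5 w.re hw1.1 hw2.1 hw1.2.1 hw2.2.1
  have hD : Ht p f w.re - Ht p e w.re = 0 := by rw [← hw1.2.2, ← hw2.2.2, sub_self]
  have hbe := he.2
  have hbf := hf.2
  have hae := he.1
  have haf := hf.1
  have eL : w.re = (p e.1).re → w = p e.1 := fun h =>
    Complex.ext h (by rw [hw1.2.2, h, Ht_left])
  have eR : w.re = (p e.2).re → w = p e.2 := fun h =>
    Complex.ext h (by rw [hw1.2.2, h, Ht_right p e le])
  by_cases hov : max e.1 f.1 < min e.2 f.2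
  swap
  · exfalso
    rcases eq_or_lt_of_le (not_lt.1 hov) with h | h
    · rw [h] at k2
      have hw : w.re = (p (max e.1 f.1)).re := le_antisymm k2 k1
      apply hw3
      rcases le_or_gt e.1 f.1 with h4 | h4
      · have h5 : max e.1 f.1 = f.1 := max_eq_right h4
        have h6 : e.2 = f.1 := by omega
        rw [h5, ← h6] at hw
        have := eR hw
        exact ⟨Or.inr this, Or.inl (by rw [← h6]; exact this)⟩
      · have h5 : max e.1 f.1 = e.1 := max_eq_left h4.le
        have h6 : e.1 = f.2 := by omega
        rw [h5] at hw
        have := eL hw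
        exact ⟨Or.inl this, Or.inr (by rw [← h6]; exact this)⟩
    · have := hp.1 _ _ h (by omega)
      linarith
  have hxz := hp.1 _ _ hov (by omega)
  have hdiff := Ht_diff p e f (p (max e.1 f.1)).re w.re (p (min e.2 f.2)).re
  rw [hD, mul_zero] at hdiff
  rcases sign_left hp he hf hov with h1 | h1 | h1 <;>
    rcases sign_right hp he hf hov with h2 | h2 | h2
  · exact absurd (Prod.ext h1.1 h2.1) hef
  · exfalso
    rw [h1.2, sub_self, mul_zero, zero_add] at hdiff
    rcases mul_eq_zero.1 hdiff.symm with h3 | h3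
    · have := eL (by rw [← h1.1, max_self] at h3; linarith)
      exact hw3 ⟨Or.inl this, Or.inl (by rw [← h1.1]; exact this)⟩
    · linarith [h2.2]
  · exfalso
    rw [h1.2, sub_self, mul_zero, zero_add] at hdiff
    rcases mul_eq_zero.1 hdiff.symm with h3 | h3
    · have := eL (by rw [← h1.1, max_self] at h3; linarith)
      exact hw3 ⟨Or.inl this, Or.inl (by rw [← h1.1]; exact this)⟩
    · linarith [h2.2]
  · exfalso
    rw [h2.2, sub_self, mul_zero, add_zero] at hdiff
    rcases mul_eq_zero.1 hdiff.symm with h3 | h3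
    · have := eR (by rw [← h2.1, min_self] at h3; linarith)
      exact hw3 ⟨Or.inr this, Or.inr (by rw [← h2.1]; exact this)⟩
    · linarith [h1.2]
  · exact Or.inl ⟨hov, h1.1, h2.1⟩
  · exfalso
    have hz := hdiff
    refine comb_ne (by linarith) (by linarith) (by linarith) ?_ hz.symm
    exact Or.inl ⟨by linarith [h1.2], by linarith [h2.2]⟩
  · exfalso
    rw [h2.2, sub_self, mul_zero, add_zero] at hdiff
    rcases mul_eq_zero.1 hdiff.symm with h3 | h3
    · have := eR (by rw [← h2.1, min_self] at h3; linarith)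
      exact hw3 ⟨Or.inr this, Or.inr (by rw [← h2.1]; exact this)⟩
    · linarith [h1.2]
  · exfalso
    have hz := hdiff
    refine comb_ne (by linarith) (by linarith) (by linarith) ?_ hz.symm
    exact Or.inr ⟨by linarith [h1.2], by linarith [h2.2]⟩
  · right
    refine ⟨by rw [max_comm, min_comm]; exact hov, h1.1, h2.1⟩

theorem cross_iff {p : ℕ → ℂ} (hp : PolyPts n ε p) {e f : ℕ × ℕ} (he : ValidPair n e)
    (hf : ValidPair n f) (hef : e ≠ f) : Cross p e f ↔ Up ε e f ∨ Up ε f e :=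
  ⟨up_of_cross hp he hf hef, fun h => h.elim (cross_of_up hp he hf)
    (fun h => cross_symm (cross_of_up hp hf he h))⟩

/-! ## Combinatorics -/

/-- The segments cross, combinatorially. -/
def XC (ε : ℕ → Bool) (e f : ℕ × ℕ) : Prop := Up ε e f ∨ Up ε f e

theorem up_not_boundary {e f : ℕ × ℕ} (he : ValidPair n e) (hf : ValidPair n f)
    (h : XC ε e f) : ¬BoundaryEdge n ε e.1 e.2 := by
  obtain ⟨a, b⟩ := e
  obtain ⟨c, d⟩ := f
  simp only [ValidPair, XC, Up, lt_min_iff, max_lt_iff] at he hf h ⊢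
  rintro (hb | hb)
  · obtain ⟨h1, h2, h3, h4⟩ := hb
    have h5 := h4 c
    have h6 := h4 d
    simp only [LowerVertex] at h1 h2 h5 h6
    grind
  · obtain ⟨h1, h2, h3, h4⟩ := hb
    have h5 := h4 c
    have h6 := h4 d
    simp only [UpperVertex] at h1 h2 h5 h6
    grind

theorem quad1 {a b c d x y : ℕ} (h : Up ε (a, b) (c, d)) (hg : x < y)
    (h1 : XC ε (a, d) (x, y)) : XC ε (a, b) (x, y) ∨ XC ε (c, d) (x, y) := by
  simp only [XC, Up, lt_min_iff, max_lt_iff] at h h1 ⊢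
  obtain ⟨h0, h2 | h2, h3 | h3⟩ := h <;>
    rcases h1 with ⟨k0, k1 | k1, k2 | k2⟩ | ⟨k0, k1 | k1, k2 | k2⟩ <;>
    grind (splits := 40)

theorem quad2 {a b c d x y : ℕ} (h : Up ε (a, b) (c, d)) (hg : x < y)
    (h1 : XC ε (c, b) (x, y)) : XC ε (a, b) (x, y) ∨ XC ε (c, d) (x, y) := by
  simp only [XC, Up, lt_min_iff, max_lt_iff] at h h1 ⊢
  obtain ⟨h0, h2 | h2, h3 | h3⟩ := h <;>
    rcases h1 with ⟨k0, k1 | k1, k2 | k2⟩ | ⟨k0, k1 | k1, k2 | k2⟩ <;>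
    grind (splits := 40)

theorem up_irrefl (e : ℕ × ℕ) : ¬Up ε e e := by
  simp [Up]

theorem up_not_up {e f : ℕ × ℕ} (h : Up ε e f) : ¬Up ε f e := by
  obtain ⟨a, b⟩ := e
  obtain ⟨c, d⟩ := f
  simp only [Up, lt_min_iff, max_lt_iff] at h ⊢
  grind

theorem adj_not_xc {e f : ℕ × ℕ} (he : e.1 < e.2) (hf : f.1 < f.2)
    (h : Adj ε e f) : ¬XC ε e f := by
  obtain ⟨a, b⟩ := e
  obtain ⟨c, d⟩ := f
  simp only [XC, Up, Adj, lt_min_iff, max_lt_iff] at he hf h ⊢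
  omega

theorem XC.symm {e f : ℕ × ℕ} (h : XC ε e f) : XC ε f e := Or.symm h


/-! ## Almost rigid representations -/

theorem summand_perm {A : ARep k n ε} {L : List (ℕ × ℕ)} {M : List (ℕ × ℕ)}
    (hL : ∀ f ∈ L, ValidPair n f) (hM : ∀ f ∈ M, ValidPair n f)
    (hA : A.Iso (SL k n ε M)) (h : A.IsSummand (SL k n ε L)) :
    ∃ L', (∀ f ∈ L', ValidPair n f) ∧ L.Perm (M ++ L') := by
  obtain ⟨B, hB⟩ := h
  obtain ⟨L', hL', hB'⟩ := exists_decomp B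
  refine ⟨L', hL', perm_of_SL_iso (k := k) (ε := ε) hL ?_ ?_⟩
  · intro f hf
    rcases List.mem_append.1 hf with hf | hf
    · exact hM f hf
    · exact hL' f hf
  · exact (hB.trans (hA.dsum hB')).trans (SL_append M L').symm

theorem SL_single (e : ℕ × ℕ) : (IR k n ε e).Iso (SL k n ε [e]) :=
  (dsum_zero zeroRep_isZero).symm

theorem summand_mem {A : ARep k n ε} {L : List (ℕ × ℕ)} {e : ℕ × ℕ}
    (hL : ∀ f ∈ L, ValidPair n f) (he : ValidPair n e) (hA : A.Iso (IR k n ε e))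
    (h : A.IsSummand (SL k n ε L)) : e ∈ L := by
  obtain ⟨L', -, hp⟩ := summand_perm (M := [e]) hL (by simpa using he)
    (hA.trans (SL_single e)) h
  rw [hp.mem_iff]
  simp

theorem mem_summand {L : List (ℕ × ℕ)} {e : ℕ × ℕ} (he : e ∈ L) :
    (IR k n ε e).IsSummand (SL k n ε L) :=
  ⟨SL k n ε (L.erase e), SL_perm (List.perm_cons_erase he)⟩

theorem basic_iff {L : List (ℕ × ℕ)} (hL : ∀ f ∈ L, ValidPair n f) :
    (SL k n ε L).Basic ↔ L.Nodup := by
  constructor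
  · intro h
    by_contra hn
    rw [← List.exists_duplicate_iff_not_nodup] at hn
    obtain ⟨e, hd⟩ := hn
    have h2 : 2 ≤ L.count e := by
      convert List.duplicate_iff_two_le_count.1 hd
    have h3 : e ∈ L := hd.mem
    have h4 : e ∈ L.erase e := by
      rw [← List.one_le_count_iff, List.count_erase_self]
      omega
    have hp : L.Perm (e :: e :: (L.erase e).erase e) :=
      (List.perm_cons_erase h3).trans ((List.perm_cons_erase h4).cons e)
    exact h _ (IR_indec (hL e h3)) ⟨SL k n ε ((L.erase e).erase e),
      (SL_perm hp).trans (dsum_assoc (IR k n ε e) (IR k n ε e) _).symm⟩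
  · intro hn A hA hs
    obtain ⟨e, he, hAe⟩ := indec_iso_IR hA
    obtain ⟨L', -, hp⟩ := summand_perm (M := [e, e]) hL (by simpa using he)
      (hAe.dsum (hAe.trans (SL_single e))) hs
    have := hp.nodup_iff.1 hn
    simp at this

theorem not_ext_of_up {e f : ℕ × ℕ} (he : ValidPair n e) (hf : ValidPair n f)
    (h : Up ε e f) : ¬(ExtZero (IR k n ε f) (IR k n ε e) ∨
      ExtOneDimIndecMid (IR k n ε f) (IR k n ε e)) := by
  obtain ⟨σ, hσ, hE⟩ := up_ses (k := k) he hf h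
  obtain ⟨h0, -, -⟩ := h
  have hbe := he.2
  have hbf := hf.2
  rintro (h | ⟨τ, -, hτ, h⟩)
  · exact hσ (h σ)
  · obtain ⟨c, -, φ, hφ, -, -⟩ := h σ hσ
    have hi : τ.E.Iso σ.E := ⟨φ, hφ⟩
    rw [hE] at hi
    rcases hτ.2 _ _ hi with hz | hz
    · exact IR_not_isZero (e := (e.1, f.2)) ⟨by simp only []; omega, hbf⟩ hz
    · exact IR_not_isZero (e := (f.1, e.2)) ⟨by simp only []; omega, hbe⟩ hz

theorem ar_iff {L : List (ℕ × ℕ)} (hL : ∀ f ∈ L, ValidPair n f) :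
    AlmostRigid (SL k n ε L) ↔ L.Nodup ∧ ∀ e ∈ L, ∀ f ∈ L, ¬Up ε e f := by
  rw [AlmostRigid, basic_iff hL]
  refine and_congr_right fun _ => ⟨fun h e he f hf hu => ?_, fun h A B hA hB hAs hBs => ?_⟩
  · exact not_ext_of_up (k := k) (hL e he) (hL f hf) hu
      (h _ _ (IR_indec (hL f hf)) (IR_indec (hL e he)) (mem_summand hf) (mem_summand he))
  · obtain ⟨f, hf, hAf⟩ := indec_iso_IR hA
    obtain ⟨e, he, hBe⟩ := indec_iso_IR hB
    have hfL := summand_mem hL hf hAf hAs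
    have heL := summand_mem hL he hBe hBs
    by_cases ha : Adj ε e f
    · exact Or.inr ((ext_of_adj he hf ha).of_iso hAf.symm hBe.symm)
    · exact Or.inl ((extZero_of_not he hf ha (h e heL f hfL)).of_iso hAf.symm hBe.symm)

theorem AlmostRigid.of_iso {X Y : ARep k n ε} (h : AlmostRigid X) (hi : X.Iso Y) :
    AlmostRigid Y :=
  ⟨fun A hA hs => h.1 A hA (hs.of_iso (ARep.Iso.refl _) hi.symm), fun A B hA hB hAs hBs =>
    h.2 A B hA hB (hAs.of_iso (ARep.Iso.refl _) hi.symm) (hBs.of_iso (ARep.Iso.refl _) hi.symm)⟩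

theorem MaxAlmostRigid.of_iso {X Y : ARep k n ε} (h : MaxAlmostRigid X) (hi : X.Iso Y) :
    MaxAlmostRigid Y :=
  ⟨h.1.of_iso hi, fun M hM hY => h.2 M hM (hY.of_iso (hi.symm.dsum (ARep.Iso.refl M)))⟩

theorem MarCovers.of_iso {X Y X' Y' : ARep k n ε} (h : MarCovers X Y) (hX : X.Iso X')
    (hY : Y.Iso Y') : MarCovers X' Y' := by
  obtain ⟨M1, M2, C, h1, h2, h3, h4, h5⟩ := h
  exact ⟨M1, M2, C, h1, h2, hX.symm.trans h3, hY.symm.trans h4, h5⟩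

/-- The combinatorial version of a triangulation. -/
def IsTri (n : ℕ) (ε : ℕ → Bool) (S : Set (ℕ × ℕ)) : Prop :=
  (∀ e ∈ S, ∀ f ∈ S, ¬Up ε e f) ∧ ∀ g, ValidPair n g → g ∉ S → ∃ f ∈ S, XC ε g f

theorem mar_iff {L : List (ℕ × ℕ)} (hL : ∀ f ∈ L, ValidPair n f) :
    MaxAlmostRigid (SL k n ε L) ↔ L.Nodup ∧ IsTri n ε {e | e ∈ L} := by
  rw [MaxAlmostRigid, ar_iff hL, and_assoc]
  refine and_congr_right fun hn => and_congr_right fun hu => ⟨fun h g hg hgL => ?_,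
    fun h M hM har => ?_⟩
  · by_contra hc
    push Not at hc
    apply h _ (IR_not_isZero hg)
    have hv : ∀ f ∈ g :: L, ValidPair n f := by
      intro f hf
      rcases List.mem_cons.1 hf with rfl | hf
      · exact hg
      · exact hL f hf
    have : AlmostRigid (SL k n ε (g :: L)) := by
      rw [ar_iff hv]
      refine ⟨List.nodup_cons.2 ⟨hgL, hn⟩, fun e he f hf huef => ?_⟩
      rcases List.mem_cons.1 he with he' | he' <;> rcases List.mem_cons.1 hf with hf' | hf'
      · subst he'
        subst hf'
        exact up_irrefl _ huef
      · subst he'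
        exact hc f hf' (Or.inl huef)
      · subst hf'
        exact hc e he' (Or.inr huef)
      · exact hu e he' f hf' huef
    exact this.of_iso (dsum_comm _ _)
  · obtain ⟨LM, hLM, hMi⟩ := exists_decomp M
    have h1 : AlmostRigid (SL k n ε (L ++ LM)) :=
      har.of_iso (((ARep.Iso.refl _).dsum hMi).trans (SL_append L LM).symm)
    rw [ar_iff (by
      intro f hf
      rcases List.mem_append.1 hf with hf | hf
      · exact hL f hf
      · exact hLM f hf)] at h1
    cases LM with
    | nil => exact hM (hMi.symm.isZero zeroRep_isZero)
    | cons g LM =>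
      have hg : g ∉ L := fun hg => (List.nodup_append.1 h1.1).2.2 g hg g (by simp) rfl
      obtain ⟨f, hf, hx⟩ := h g (hLM g (by simp)) hg
      have hf' : f ∈ L := hf
      rcases hx with hx | hx
      · exact h1.2 g (by simp) f (by simp [hf']) hx
      · exact h1.2 f (by simp [hf']) g (by simp) hx

theorem tri_iff {p : ℕ → ℂ} (hp : PolyPts n ε p) (T : Finset (ℕ × ℕ)) :
    IsTriangulation n p T ↔ (∀ e ∈ T, ValidPair n e) ∧ IsTri n ε {e | e ∈ T} := by
  rw [IsTriangulation]
  refine and_congr_right fun hv => and_congr ⟨fun h e he f hf hu => ?_, fun h e he f hf hef hc => ?_⟩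
    ⟨fun h g hg hgT => ?_, fun h g hg hgT => ?_⟩
  · have hef : e ≠ f := by rintro rfl; exact up_irrefl _ hu
    exact h e he f hf hef ((cross_iff hp (hv e he) (hv f hf) hef).2 (Or.inl hu))
  · rcases (cross_iff hp (hv e he) (hv f hf) hef).1 hc with hu | hu
    · exact h e he f hf hu
    · exact h f hf e he hu
  · obtain ⟨f, hf, hc⟩ := h g hg hgT
    have hef : g ≠ f := by rintro rfl; exact hgT hf
    exact ⟨f, hf, (cross_iff hp hg (hv f hf) hef).1 hc⟩
  · obtain ⟨f, hf, hc⟩ := h g hg hgT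
    have hef : g ≠ f := by rintro rfl; exact hgT hf
    exact ⟨f, hf, (cross_iff hp hg (hv f hf) hef).2 hc⟩

theorem FRep_eq (T : Finset (ℕ × ℕ)) : FRep k n ε T = SL k n ε T.toList := rfl

theorem mar_FRep {p : ℕ → ℂ} (hp : PolyPts n ε p) {T : Finset (ℕ × ℕ)}
    (hT : IsTriangulation n p T) : MaxAlmostRigid (FRep k n ε T) := by
  rw [tri_iff hp] at hT
  rw [FRep_eq, mar_iff (by simpa using hT.1)]
  refine ⟨T.nodup_toList, ?_⟩
  simpa using hT.2

theorem exists_tri {p : ℕ → ℂ} (hp : PolyPts n ε p) {X : ARep k n ε}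
    (hX : MaxAlmostRigid X) :
    ∃ T : Finset (ℕ × ℕ), IsTriangulation n p T ∧ X.Iso (FRep k n ε T) := by
  obtain ⟨L, hL, hi⟩ := exists_decomp X
  have h := hX.of_iso hi
  rw [mar_iff hL] at h
  refine ⟨L.toFinset, ?_, hi.trans (SL_perm (List.toFinset_toList h.1).symm)⟩
  rw [tri_iff hp]
  refine ⟨by simpa using hL, ?_⟩
  simpa using h.2

/-! ## The covering relations -/

theorem toList_perm {T : Finset (ℕ × ℕ)} {e : ℕ × ℕ} (he : e ∈ T) :
    T.toList.Perm (e :: (T.erase e).toList) := by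
  have h := Finset.toList_insert (Finset.notMem_erase e T)
  rwa [Finset.insert_erase he] at h

theorem mar_of_tri {p : ℕ → ℂ} (hp : PolyPts n ε p) {T1 T2 : Finset (ℕ × ℕ)}
    (hT1 : IsTriangulation n p T1) (hT2 : IsTriangulation n p T2)
    (h : TriCovers n ε p T1 T2) : MarCovers (FRep k n ε T1) (FRep k n ε T2) := by
  rw [tri_iff hp] at hT1 hT2
  obtain ⟨v1, u1, m1⟩ := hT1
  obtain ⟨v2, u2, m2⟩ := hT2
  obtain ⟨e, f, hef, -, -, he, hf, heq, hs⟩ := h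
  have hfT1 : f ∉ T1 := by
    intro hc
    have : f ∈ T1.erase e := Finset.mem_erase.2 ⟨hef.symm, hc⟩
    rw [heq] at this
    exact (Finset.mem_erase.1 this).1 rfl
  have hup : Up ε e f := by
    obtain ⟨g, hg, hx⟩ := m1 f (v2 f hf) hfT1
    have hge : g = e := by
      by_contra hc
      have : g ∈ T1.erase e := Finset.mem_erase.2 ⟨hc, hg⟩
      rw [heq] at this
      have hg2 := (Finset.mem_erase.1 this).2
      rcases hx with hx | hx
      · exact u2 f hf g hg2 hx
      · exact u2 g hg2 f hf hx
    subst hge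
    rcases hx with hx | hx
    · exact absurd (up_slope hp (v2 f hf) (v1 _ he) hx) (not_lt.2 hs.le)
    · exact hx
  have hbe := (v1 e he).2
  have hbf := (v2 f hf).2
  have h0 := hup.1
  have key : ∀ g, ValidPair n g → g ≠ e → ¬XC ε g e →
      (∀ x, ValidPair n x → XC ε g x → XC ε e x ∨ XC ε f x) → g ∈ T1.erase e := by
    intro g hg hge hge' hq
    refine Finset.mem_erase.2 ⟨hge, ?_⟩
    by_contra hc
    obtain ⟨x, hx, hxg⟩ := m1 g hg hc
    rcases hq x (v1 x hx) hxg with h | h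
    · rcases h with h | h
      · exact u1 e he x hx h
      · exact u1 x hx e he h
    · have hxe : x = e := by
        by_contra hc
        have : x ∈ T1.erase e := Finset.mem_erase.2 ⟨hc, hx⟩
        rw [heq] at this
        have hg2 := (Finset.mem_erase.1 this).2
        rcases h with h | h
        · exact u2 f hf x hg2 h
        · exact u2 x hg2 f hf h
      subst hxe
      exact hge' hxg
  clear hs
  obtain ⟨σ, hσ, hE⟩ := up_ses (k := k) (v1 e he) (v2 f hf) hup
  have q1 := @quad1 ε e.1 e.2 f.1 f.2
  have q2 := @quad2 ε e.1 e.2 f.1 f.2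
  have g1 : ValidPair n (e.1, f.2) := ⟨by simp only []; omega, hbf⟩
  have g2 : ValidPair n (f.1, e.2) := ⟨by simp only []; omega, hbe⟩
  have h1 : (e.1, f.2) ∈ T1.erase e := by
    refine key _ g1 ?_ ?_ fun x hx hxc => q1 hup hx.1 hxc
    · rintro hc
      have : e.2 = f.2 := by rw [← hc]
      have := hup.2.2
      omega
    · simp [XC, Up]
  have h2 : (f.1, e.2) ∈ T1.erase e := by
    refine key _ g2 ?_ ?_ fun x hx hxc => q2 hup hx.1 hxc
    · rintro hc
      have : e.1 = f.1 := by rw [← hc]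
      have := hup.2.1
      omega
    · simp [XC, Up]
  refine ⟨IR k n ε e, IR k n ε f, SL k n ε (T1.erase e).toList, IR_indec (v1 e he),
    IR_indec (v2 f hf), SL_perm (toList_perm he), ?_, σ, hσ, IR k n ε (e.1, f.2),
    IR k n ε (f.1, e.2), IR_indec g1, IR_indec g2, mem_summand (Finset.mem_toList.2 h1),
    mem_summand (Finset.mem_toList.2 h2), ?_⟩
  · rw [heq]
    exact SL_perm (toList_perm hf)
  · rw [hE]
    exact ARep.Iso.refl _

theorem tri_of_mar {p : ℕ → ℂ} (hp : PolyPts n ε p) {T1 T2 : Finset (ℕ × ℕ)}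
    (hT1 : IsTriangulation n p T1) (hT2 : IsTriangulation n p T2)
    (h : MarCovers (FRep k n ε T1) (FRep k n ε T2)) : TriCovers n ε p T1 T2 := by
  rw [tri_iff hp] at hT1 hT2
  obtain ⟨v1, u1, m1⟩ := hT1
  obtain ⟨v2, u2, m2⟩ := hT2
  obtain ⟨M1, M2, C, hM1, hM2, hi1, hi2, σ, hσ, -⟩ := h
  obtain ⟨e, he, hMe⟩ := indec_iso_IR hM1
  obtain ⟨f, hf, hMf⟩ := indec_iso_IR hM2
  obtain ⟨LC, hLC, hC⟩ := exists_decomp C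
  have hv : ∀ g, ValidPair n g → ∀ x ∈ g :: LC, ValidPair n x := by
    intro g hg x hx
    rcases List.mem_cons.1 hx with rfl | hx
    · exact hg
    · exact hLC x hx
  have p1 : T1.toList.Perm (e :: LC) := perm_of_SL_iso (k := k) (ε := ε)
    (by simpa using v1) (hv e he) (hi1.trans (hMe.dsum hC))
  have p2 : T2.toList.Perm (f :: LC) := perm_of_SL_iso (k := k) (ε := ε)
    (by simpa using v2) (hv f hf) (hi2.trans (hMf.dsum hC))
  have mem1 : ∀ x, x ∈ T1 ↔ x = e ∨ x ∈ LC := fun x => by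
    rw [← Finset.mem_toList, p1.mem_iff, List.mem_cons]
  have mem2 : ∀ x, x ∈ T2 ↔ x = f ∨ x ∈ LC := fun x => by
    rw [← Finset.mem_toList, p2.mem_iff, List.mem_cons]
  have n1 : e ∉ LC := (List.nodup_cons.1 (p1.nodup_iff.1 T1.nodup_toList)).1
  have n2 : f ∉ LC := (List.nodup_cons.1 (p2.nodup_iff.1 T2.nodup_toList)).1
  have hau : Adj ε e f ∨ Up ε e f := by
    by_contra hc
    push Not at hc
    exact hσ (((extZero_of_not he hf hc.1 hc.2).of_iso hMf.symm hMe.symm) σ)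
  have hef : e ≠ f := by
    rintro rfl
    have := he.1
    rcases hau with h | h
    · rcases h with h | h <;> omega
    · exact up_irrefl _ h
  have hfT1 : f ∉ T1 := by
    rw [mem1]
    rintro (h | h)
    · exact hef h.symm
    · exact n2 h
  have hxc : XC ε f e := by
    obtain ⟨g, hg, hx⟩ := m1 f hf hfT1
    rcases (mem1 g).1 hg with rfl | hg'
    · exact hx
    · exfalso
      have hg2 := (mem2 g).2 (Or.inr hg')
      have hf2 := (mem2 f).2 (Or.inl rfl)
      rcases hx with hx | hx
      · exact u2 f hf2 g hg2 hx
      · exact u2 g hg2 f hf2 hx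
  have hup : Up ε e f := hau.resolve_left fun h => adj_not_xc he.1 hf.1 h hxc.symm
  refine ⟨e, f, hef, ⟨he, up_not_boundary he hf hxc.symm⟩, ⟨hf, up_not_boundary hf he hxc⟩,
    (mem1 e).2 (Or.inl rfl), (mem2 f).2 (Or.inl rfl), ?_, up_slope hp he hf hup⟩
  ext x
  rw [Finset.mem_erase, Finset.mem_erase, mem1, mem2]
  constructor
  · rintro ⟨h, h' | h'⟩
    · exact absurd h' h
    · exact ⟨fun hc => n2 (hc ▸ h'), Or.inr h'⟩
  · rintro ⟨h, h' | h'⟩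
    · exact absurd h' h
    · exact ⟨fun hc => n1 (hc ▸ h'), Or.inr h'⟩

theorem eq_of_FRep_iso {p : ℕ → ℂ} {T1 T2 : Finset (ℕ × ℕ)}
    (hT1 : IsTriangulation n p T1) (hT2 : IsTriangulation n p T2)
    (h : (FRep k n ε T1).Iso (FRep k n ε T2)) : T1 = T2 := by
  have hp : T1.toList.Perm T2.toList := perm_of_SL_iso (k := k) (ε := ε)
    (by simpa using hT1.1) (by simpa using hT2.1) h
  ext x
  rw [← Finset.mem_toList, hp.mem_iff, Finset.mem_toList]

theorem chain_back {p : ℕ → ℂ} (hp : PolyPts n ε p) {T1 : Finset (ℕ × ℕ)}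
    (hT1 : IsTriangulation n p T1) {Y : ARep k n ε}
    (h : Relation.ReflTransGen
      (fun X Y : ARep k n ε => MaxAlmostRigid X ∧ MaxAlmostRigid Y ∧ MarCovers X Y)
      (FRep k n ε T1) Y) :
    ∃ T, IsTriangulation n p T ∧ Y.Iso (FRep k n ε T) ∧ Relation.ReflTransGen
      (fun A B => IsTriangulation n p A ∧ IsTriangulation n p B ∧ TriCovers n ε p A B) T1 T := by
  induction h with
  | refl => exact ⟨T1, hT1, ARep.Iso.refl _, Relation.ReflTransGen.refl⟩
  | tail _ hYZ ih =>
    obtain ⟨T, hT, hi, hc⟩ := ih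
    obtain ⟨-, hZ, hcov⟩ := hYZ
    obtain ⟨T', hT', hi'⟩ := exists_tri hp hZ
    exact ⟨T', hT', hi', hc.tail ⟨hT, hT', tri_of_mar hp hT hT' (hcov.of_iso hi hi')⟩⟩


/-- `F` preserves and reflects covering relations, and therefore induces a
poset isomorphism from the type `A` Cambrian lattice on triangulations of `P(Q)` onto
the poset of (isomorphism classes of) maximal almost rigid representations of `Q`. -/
theorem stmt_15 (k : Type) [Field k] (n : ℕ) (ε : ℕ → Bool) (p : ℕ → ℂ)
    (hp : PolyPts n ε p) :
    (∀ T1 T2 : Finset (ℕ × ℕ), IsTriangulation n p T1 → IsTriangulation n p T2 →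
      (TriCovers n ε p T1 T2 ↔ MarCovers (FRep k n ε T1) (FRep k n ε T2))) ∧
    (∀ T1 T2 : Finset (ℕ × ℕ), IsTriangulation n p T1 → IsTriangulation n p T2 →
      (Relation.ReflTransGen
          (fun A B => IsTriangulation n p A ∧ IsTriangulation n p B ∧ TriCovers n ε p A B)
          T1 T2 ↔
        Relation.ReflTransGen
          (fun X Y : ARep k n ε => MaxAlmostRigid X ∧ MaxAlmostRigid Y ∧ MarCovers X Y)
          (FRep k n ε T1) (FRep k n ε T2))) := by
  refine ⟨fun T1 T2 h1 h2 => ⟨mar_of_tri hp h1 h2, tri_of_mar hp h1 h2⟩,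
    fun T1 T2 h1 h2 => ⟨fun h => ?_, fun h => ?_⟩⟩
  · exact h.lift (FRep k n ε) fun A B hAB =>
      ⟨mar_FRep hp hAB.1, mar_FRep hp hAB.2.1, mar_of_tri hp hAB.1 hAB.2.1 hAB.2.2⟩
  · obtain ⟨T, hT, hi, hc⟩ := chain_back hp h1 h
    rw [eq_of_FRep_iso h2 hT hi]
    exact hc

end CambrianA
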